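/- Let (X,d,μ) be a metric measure space with finite Hausdorff dimension. Suppose there exists C ≥ 1 such that for every Lipschitz f : X → ℝ and every *-upper gradient ρ of f, one has Lip(f,x) ≤ C·ρ(x) for μ-almost every x ∈ X. Then (X,d,μ) is a Lipschitz differentiability space, and the charts can be chosen with every chart dimension n_i ≤ dim_H X. -/

import Mathlib

open MeasureTheory Metric Set Filter Topology ENNReal NNReal
open scoped RealInnerProductSpace

noncomputable section

namespace BKO

/-- `ℝⁿ` with the Euclidean metric. -/
abbrev E (n : ℕ) : Type := EuclideanSpace ℝ (Fin n)

variable {X : Type*} [MetricSpace X]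

/-- A set `G ⊆ ℝ × X` is the graph of a curve fragment if all first coordinates lie
in `[0,1]` and it is the graph of a `2`-biLipschitz function defined on a subset of `[0,1]`. -/
def IsFragmentGraph (X : Type*) [MetricSpace X] (G : Set (ℝ × X)) : Prop :=
  (∀ p ∈ G, p.1 ∈ Set.Icc (0:ℝ) 1) ∧
  ∀ p ∈ G, ∀ q ∈ G, |p.1 - q.1| ≤ 2 * dist p.2 q.2 ∧ dist p.2 q.2 ≤ 2 * |p.1 - q.1|

/-- The space `Γ(X)` of curve fragments, identified with their graphs (nonempty compact
subsets of `[0,1] × X`), with the Hausdorff metric `d_Γ(γ₁,γ₂) = d_H(gr γ₁, gr γ₂)`. -/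
def Fragment (X : Type*) [MetricSpace X] : Type _ :=
  {G : TopologicalSpace.NonemptyCompacts (ℝ × X) // IsFragmentGraph X (G : Set (ℝ × X))}

instance : MetricSpace (Fragment X) :=
  inferInstanceAs (MetricSpace {G : TopologicalSpace.NonemptyCompacts (ℝ × X) // _})

instance : MeasurableSpace (Fragment X) := borel _
instance : BorelSpace (Fragment X) := ⟨rfl⟩

namespace Fragment

/-- The graph of a curve fragment. -/
def graph (γ : Fragment X) : Set (ℝ × X) := (γ.1 : Set (ℝ × X))

/-- The (compact) domain of a curve fragment. -/
def dom (γ : Fragment X) : Set ℝ := Prod.fst '' γ.graph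

/-- The image of a curve fragment. -/
def im (γ : Fragment X) : Set X := Prod.snd '' γ.graph

/-- The function `dom γ → X` determined by the graph (junk value off the domain). -/
def fn (γ : Fragment X) (t : ℝ) : X :=
  @dite X (∃ x, (t, x) ∈ γ.graph) (Classical.dec _)
    (fun h => h.choose) (fun _ => γ.1.nonempty.choose.2)

/-- `γ_* 𝓛¹`: the pushforward under `γ` of Lebesgue measure restricted to `dom γ`. -/
def measure [MeasurableSpace X] (γ : Fragment X) : Measure X :=
  (volume.restrict γ.dom).map γ.fn

end Fragment

/-- The measure `ν(ℙ)`, `ν(ℙ)(B) = ∫ γ_*𝓛¹(B) dℙ(γ)`. -/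
def nu [MeasurableSpace X] (ℙ : Measure (Fragment X)) : Measure X :=
  ℙ.bind Fragment.measure

/-- The cone `C(w,θ) = {v : |⟨v,w⟩| ≥ θ‖v‖}`. -/
def cone {n : ℕ} (w : E n) (θ : ℝ) : Set (E n) := {v | θ * ‖v‖ ≤ |⟪v, w⟫|}

/-- A cone in `ℝⁿ` is a set of the form `C(w,θ)` with `w ∈ Sⁿ⁻¹`, `θ ∈ (0,1)`. -/
def IsCone {n : ℕ} (C : Set (E n)) : Prop :=
  ∃ (w : E n) (θ : ℝ), ‖w‖ = 1 ∧ θ ∈ Set.Ioo (0:ℝ) 1 ∧ C = cone w θ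

/-- `γ` is a `C`-curve with respect to `φ`. -/
def IsConeCurve {n : ℕ} (φ : X → E n) (C : Set (E n)) (γ : Fragment X) : Prop :=
  ∃ δ > (0:ℝ), ∀ p ∈ γ.graph, ∀ q ∈ γ.graph,
    φ p.2 - φ q.2 ∈ C \ Metric.ball 0 (δ * |p.1 - q.1|)

/-- `ℙ` is a `C`-Alberti representation of `μ` with respect to `φ`. -/
def IsConeAlbertiRep [MeasurableSpace X] {n : ℕ} (μ : Measure X) (φ : X → E n)
    (C : Set (E n)) (ℙ : Measure (Fragment X)) : Prop :=
  IsProbabilityMeasure ℙ ∧ μ ≪ nu ℙ ∧ ∀ᵐ γ ∂ℙ, IsConeCurve φ C γ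

/-- `S` is `C`-null with respect to `φ`: every `C`-curve meets `S` in `𝓗¹`-measure zero. -/
def ConeNull [MeasurableSpace X] [BorelSpace X] {n : ℕ} (φ : X → E n) (C : Set (E n))
    (S : Set X) : Prop :=
  ∀ γ : Fragment X, IsConeCurve φ C γ → μH[1] (γ.im ∩ S) = 0

/-- Cones `C₁,…,C_m` are independent. -/
def IndepCones {n m : ℕ} (C : Fin m → Set (E n)) : Prop :=
  ∀ v : Fin m → E n, (∀ i, v i ∈ C i ∧ v i ≠ 0) → LinearIndependent ℝ v

/-- `μ` has `n` independent Alberti representations. -/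
def HasIndepAlberti [MeasurableSpace X] (μ : Measure X) (n : ℕ) : Prop :=
  ∃ φ : X → E n, (∃ K, LipschitzWith K φ) ∧ ∃ C : Fin n → Set (E n),
    (∀ i, IsCone (C i)) ∧ IndepCones C ∧ ∀ i, ∃ ℙ, IsConeAlbertiRep μ φ (C i) ℙ

/-- The collection `𝒮(φ)` of singular sets. -/
def MemScal [MeasurableSpace X] [BorelSpace X] {n : ℕ} (φ : X → E n) (S : Set X) : Prop :=
  MeasurableSet S ∧ ∀ θ ∈ Set.Ioo (0:ℝ) 1, ∃ (m : ℕ) (S' : Fin m → Set X) (w : Fin m → E n),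
    S = (⋃ i, S' i) ∧ ∀ i, MeasurableSet (S' i) ∧ ‖w i‖ = 1 ∧ ConeNull φ (cone (w i) θ) (S' i)

/-- `Lip(f,x) = limsup_{r→0⁺} sup_{d(x,y)≤r} |f(y)-f(x)|/r`. -/
def lipAt (f : X → ℝ) (x : X) : ℝ :=
  Filter.limsup (fun r : ℝ => sSup ((fun y => |f y - f x| / r) '' Metric.closedBall x r))
    (𝓝[>] (0:ℝ))

/-- `ind φ = {x : Lip(D⬝φ, x) > 0 for all D ∈ Sⁿ⁻¹}`. -/
def indSet {n : ℕ} (φ : X → E n) : Set X :=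
  {x | ∀ D : E n, ‖D‖ = 1 → 0 < lipAt (fun y => ⟪φ y, D⟫) x}

/-- `f` is differentiable with respect to `φ` at `x₀`, with a unique derivative. -/
def DiffWrtAt {n : ℕ} (φ : X → E n) (f : X → ℝ) (x₀ : X) : Prop :=
  ∃! L : E n →ₗ[ℝ] ℝ,
    Filter.Tendsto (fun x => |f x - f x₀ - L (φ x - φ x₀)| / dist x x₀) (𝓝[≠] x₀) (𝓝 0)

/-- `(X,d,μ)` is a Lipschitz differentiability space, with all chart dimensions
satisfying the predicate `P`. -/
def IsLipDiffSpaceWith [MeasurableSpace X] (μ : Measure X) (P : ℕ → Prop) : Prop :=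
  ∃ (N : ℕ → ℕ) (U : ℕ → Set X) (φ : (i : ℕ) → X → E (N i)),
    (∀ i, P (N i)) ∧ (∀ i, MeasurableSet (U i)) ∧ (⋃ i, U i) = Set.univ ∧
    (∀ i, ∃ K, LipschitzWith K (φ i)) ∧
    ∀ f : X → ℝ, (∃ K, LipschitzWith K f) →
      ∀ i, ∀ᵐ x ∂μ, x ∈ U i → DiffWrtAt (φ i) f x

/-- `ρ` is an upper gradient of `f`. -/
def IsUpperGradient (f ρ : X → ℝ) : Prop :=
  ∀ γ : ℝ → X, LipschitzOnWith 1 γ (Set.Icc 0 1) →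
    |f (γ 1) - f (γ 0)| ≤ ∫ t in Set.Icc (0:ℝ) 1, ρ (γ t)

/-- `ρ` is a `*`-upper gradient of `f`. -/
def IsStarUpperGradient (f ρ : X → ℝ) : Prop :=
  ∀ γ : Fragment X, LipschitzOnWith 1 γ.fn γ.dom →
    ∀ᵐ t ∂(volume.restrict γ.dom),
      ∀ v : ℝ, HasDerivWithinAt (f ∘ γ.fn) v γ.dom t → |v| ≤ ρ (γ.fn t)

/-- The dyadic cube of side length `2^{-m}` in `[0,1)ⁿ` indexed by `k`. -/
def dyadicCube (n m : ℕ) (k : Fin n → Fin (2 ^ m)) : Set (E n) :=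
  {x | ∀ i, (k i : ℝ) / 2 ^ m ≤ x i ∧ x i < ((k i : ℝ) + 1) / 2 ^ m}

section Grid

variable {n : ℕ}

/-- The index of the half-open cube of side length `b⁻ᵐ` that contains `x`. -/
def gridCell (b m : ℕ) (x : Fin n → ℝ) : Fin n → ℤ := fun i => ⌊(b : ℝ) ^ m * x i⌋

/-- The points in the same level `m` cube as `x` whose level `m + 1` cube agrees with that of `x`
in the first `l` coordinates. -/
def partialCell (b m l : ℕ) (x : Fin n → ℝ) : Set (Fin n → ℝ) :=
  {y | gridCell b m y = gridCell b m x ∧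
    ∀ i : Fin n, (i : ℕ) < l → gridCell b (m + 1) y i = gridCell b (m + 1) x i}

/-- The conditional mass of the `l`-th digit of `x` at level `m + 1`, given all earlier digits. -/
def condMass (α : Measure (Fin n → ℝ)) (b m l : ℕ) (x : Fin n → ℝ) : ℝ≥0∞ :=
  α (partialCell b m (l + 1) x) / α (partialCell b m l x)

/-- The product over the first `m` levels of the conditional masses of the `j`-th digit. -/
def gridWeight (α : Measure (Fin n → ℝ)) (b m l : ℕ) (x : Fin n → ℝ) : ℝ≥0∞ :=
  ∏ k ∈ Finset.range m, condMass α b k l x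

/-- The cube indices whose coordinates differ from those of `c` by at most one. -/
def nbrCells (c : Fin n → ℤ) : Finset (Fin n → ℤ) :=
  Fintype.piFinset fun i => Finset.Icc (c i - 1) (c i + 1)

lemma card_nbrCells (c : Fin n → ℤ) : (nbrCells c).card = 3 ^ n := by
  have h : ∀ i, (c i + 1 + 1 - (c i - 1)).toNat = 3 := fun i => by
    rw [show c i + 1 + 1 - (c i - 1) = 3 by ring]; rfl
  simp [nbrCells, Fintype.card_piFinset, Int.card_Icc, h]

lemma floor_mem_Icc_of_abs_sub_le {a c : ℝ} (h : |a - c| ≤ 1) :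
    ⌊a⌋ ∈ Finset.Icc (⌊c⌋ - 1) (⌊c⌋ + 1) := by
  obtain ⟨h1, h2⟩ := abs_le.1 h
  rw [Finset.mem_Icc]
  constructor
  · rw [Int.le_floor]; push_cast; linarith [Int.floor_le c]
  · have : ⌊a⌋ < ⌊c⌋ + 2 := by
      rw [Int.floor_lt]; push_cast; linarith [Int.lt_floor_add_one c]
    omega

lemma measurable_gridCell (b m : ℕ) : Measurable (gridCell b m : (Fin n → ℝ) → Fin n → ℤ) :=
  measurable_pi_lambda _ fun i => Int.measurable_floor.comp
    ((measurable_pi_apply i).const_mul _)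

lemma measurableSet_partialCell (b m l : ℕ) (x : Fin n → ℝ) :
    MeasurableSet (partialCell b m l x) := by
  have h1 : MeasurableSet {y : Fin n → ℝ | gridCell b m y = gridCell b m x} :=
    measurable_gridCell b m (measurableSet_singleton _)
  have h2 : ∀ i : Fin n, MeasurableSet {y : Fin n → ℝ | (i : ℕ) < l →
      gridCell b (m + 1) y i = gridCell b (m + 1) x i} := fun i => by
    by_cases hi : (i : ℕ) < l
    · simp only [hi, true_imp_iff]
      exact (measurable_pi_apply i).comp (measurable_gridCell b (m + 1))
        (measurableSet_singleton (gridCell b (m + 1) x i))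
    · simp [hi]
  have : partialCell b m l x = {y | gridCell b m y = gridCell b m x} ∩
      ⋂ i : Fin n, {y | (i : ℕ) < l → gridCell b (m + 1) y i = gridCell b (m + 1) x i} := by
    ext y; simp [partialCell]
  rw [this]
  exact h1.inter (MeasurableSet.iInter h2)

lemma gridCell_eq_of_succ {b m : ℕ} (hb : 0 < b) {x y : Fin n → ℝ}
    (h : gridCell b (m + 1) x = gridCell b (m + 1) y) : gridCell b m x = gridCell b m y := by
  have hb' : (b : ℝ) ≠ 0 := by positivity
  have key : ∀ z : Fin n → ℝ, ∀ i, gridCell b m z i = gridCell b (m + 1) z i / (b : ℤ) := by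
    intro z i
    rw [gridCell, gridCell, ← Int.floor_div_natCast]
    congr 1
    rw [pow_succ]
    field_simp
  funext i
  rw [key, key, h]

lemma gridCell_eq_of_le {b m k : ℕ} (hb : 0 < b) (hk : k ≤ m) {x y : Fin n → ℝ}
    (h : gridCell b m x = gridCell b m y) : gridCell b k x = gridCell b k y := by
  induction m, hk using Nat.le_induction with
  | base => exact h
  | succ m _ ih => exact ih (gridCell_eq_of_succ hb h)

lemma partialCell_congr {b m l : ℕ} {x y : Fin n → ℝ} (h0 : gridCell b m x = gridCell b m y)
    (h : ∀ i : Fin n, (i : ℕ) < l → gridCell b (m + 1) x i = gridCell b (m + 1) y i) :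
    partialCell b m l x = partialCell b m l y := by
  ext z
  simp only [partialCell, mem_ofPred_eq, h0]
  exact and_congr_right fun _ => forall₂_congr fun i hi => by rw [h i hi]

lemma gridWeight_congr (α : Measure (Fin n → ℝ)) {b m : ℕ} (hb : 0 < b) (l : ℕ)
    {x y : Fin n → ℝ} (h : gridCell b m x = gridCell b m y) :
    gridWeight α b m l x = gridWeight α b m l y := by
  refine Finset.prod_congr rfl fun k hk => ?_
  have hk' : k + 1 ≤ m := Finset.mem_range.1 hk
  have h1 := gridCell_eq_of_le hb hk' h
  have h0 := gridCell_eq_of_succ hb h1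
  rw [condMass, condMass, partialCell_congr h0 fun i _ => congrFun h1 i,
    partialCell_congr h0 fun i _ => congrFun h1 i]

lemma measurableSet_le_gridWeight (α : Measure (Fin n → ℝ)) {b : ℕ} (hb : 0 < b) (m l : ℕ)
    (κ c : ℝ≥0∞) : MeasurableSet {x : Fin n → ℝ | c ≤ κ * gridWeight α b m l x} := by
  have : {x : Fin n → ℝ | c ≤ κ * gridWeight α b m l x} =
      gridCell b m ⁻¹' (gridCell b m '' {x | c ≤ κ * gridWeight α b m l x}) := by
    refine (subset_preimage_image _ _).antisymm ?_
    rintro x ⟨y, hy, hxy⟩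
    rwa [mem_ofPred_eq, ← gridWeight_congr α hb l hxy]
  rw [this]
  exact measurable_gridCell b m (Set.to_countable _).measurableSet

lemma measure_partialCell_le (α : Measure (Fin n → ℝ)) [IsFiniteMeasure α] (b m l : ℕ)
    (x : Fin n → ℝ) :
    α (partialCell b m l x) ≤
      (∏ i ∈ Finset.range l, condMass α b m i x) * α (partialCell b m 0 x) := by
  induction l with
  | zero => simp
  | succ l ih =>
    have hsub : partialCell b m (l + 1) x ⊆ partialCell b m l x := fun y hy =>
      ⟨hy.1, fun i hi => hy.2 i (hi.trans (Nat.lt_succ_self l))⟩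
    calc α (partialCell b m (l + 1) x)
        ≤ condMass α b m l x * α (partialCell b m l x) := by
          rw [condMass, ENNReal.div_mul_cancel']
          · intro h0; exact measure_mono_null hsub h0
          · intro h0; exact absurd h0 (measure_ne_top _ _)
      _ ≤ condMass α b m l x *
          ((∏ i ∈ Finset.range l, condMass α b m i x) * α (partialCell b m 0 x)) := by gcongr
      _ = _ := by rw [Finset.prod_range_succ]; ring

/-- The product of the directional weights dominates the normalized mass of a cube. -/
lemma measure_gridCell_le (α : Measure (Fin n → ℝ)) [IsFiniteMeasure α] {b : ℕ} (hb : 0 < b)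
    (m : ℕ) (x : Fin n → ℝ) :
    α {y | gridCell b m y = gridCell b m x} ≤
      (∏ j : Fin n, gridWeight α b m j x) * α univ := by
  induction m with
  | zero => simpa [gridWeight] using measure_mono (subset_univ _)
  | succ m ih =>
    have hsub : {y | gridCell b (m + 1) y = gridCell b (m + 1) x} ⊆ partialCell b m n x :=
      fun y hy => ⟨gridCell_eq_of_succ hb hy, fun i _ => congrFun hy i⟩
    have h0 : partialCell b m 0 x = {y | gridCell b m y = gridCell b m x} := by
      ext; simp [partialCell]
    calc α {y | gridCell b (m + 1) y = gridCell b (m + 1) x}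
        ≤ α (partialCell b m n x) := measure_mono hsub
      _ ≤ (∏ i ∈ Finset.range n, condMass α b m i x) * α (partialCell b m 0 x) :=
        measure_partialCell_le α b m n x
      _ ≤ (∏ i ∈ Finset.range n, condMass α b m i x) *
          ((∏ j : Fin n, gridWeight α b m j x) * α univ) := by rw [h0]; gcongr
      _ = _ := by
        simp only [gridWeight, Finset.prod_range_succ, Finset.prod_mul_distrib]
        rw [← Fin.prod_univ_eq_prod_range (fun i => condMass α b m i x)]
        ring

/-- Conditional masses along a family of points that differ only in the `j`-th digit sum to at
most one. -/
lemma sum_condMass_le_one (α : Measure (Fin n → ℝ)) {b m : ℕ} (j : Fin n)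
    (S : Finset (Fin n → ℝ)) (hinj : Set.InjOn (gridCell b (m + 1)) (S : Set (Fin n → ℝ)))
    (h0 : ∀ x ∈ S, ∀ y ∈ S, gridCell b m x = gridCell b m y)
    (h1 : ∀ x ∈ S, ∀ y ∈ S, ∀ i ≠ j, gridCell b (m + 1) x i = gridCell b (m + 1) y i) :
    ∑ x ∈ S, condMass α b m j x ≤ 1 := by
  rcases S.eq_empty_or_nonempty with rfl | ⟨x₀, hx₀⟩
  · simp
  have hP : ∀ x ∈ S, partialCell b m j x = partialCell b m j x₀ := fun x hx =>
    partialCell_congr (h0 x hx x₀ hx₀) fun i hi => h1 x hx x₀ hx₀ i (by rintro rfl; omega)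
  calc ∑ x ∈ S, condMass α b m j x
      = (∑ x ∈ S, α (partialCell b m (j + 1) x)) / α (partialCell b m j x₀) := by
        simp only [condMass, div_eq_mul_inv]
        rw [Finset.sum_mul]
        exact Finset.sum_congr rfl fun x hx => by rw [hP x hx]
    _ = α (⋃ x ∈ S, partialCell b m (j + 1) x) / α (partialCell b m j x₀) := by
        rw [measure_biUnion_finset _ fun x _ => measurableSet_partialCell b m _ x]
        intro x hx y hy hxy
        refine Set.disjoint_left.2 fun z hzx hzy => hxy (hinj hx hy (funext fun i => ?_))
        by_cases hi : i = j
        · subst hi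
          rw [← hzx.2 i (Nat.lt_succ_self _), ← hzy.2 i (Nat.lt_succ_self _)]
        · exact h1 x hx y hy i hi
    _ ≤ α (partialCell b m j x₀) / α (partialCell b m j x₀) := by
        gcongr
        refine iUnion₂_subset fun x hx z hz => ?_
        rw [← hP x hx]
        exact ⟨hz.1, fun i hi => hz.2 i (hi.trans (Nat.lt_succ_self _))⟩
    _ ≤ 1 := ENNReal.div_self_le_one

variable {Γ : Set (Fin n → ℝ)} {b : ℕ} {j : Fin n}

/-- The directional weights of the cubes met by a set whose chords are all nearly parallel to the
`j`-th axis grow at most like `3 ^ (n * m)`. -/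
lemma sum_gridWeight_le (α : Measure (Fin n → ℝ)) (hb : 0 < b)
    (hdiam : ∀ x ∈ Γ, ∀ y ∈ Γ, ∀ i, |x i - y i| ≤ 1)
    (hcone : ∀ x ∈ Γ, ∀ y ∈ Γ, ∀ i ≠ j, b * |x i - y i| ≤ |x j - y j|) (m : ℕ)
    (S : Finset (Fin n → ℝ)) (hS : (S : Set (Fin n → ℝ)) ⊆ Γ)
    (hinj : Set.InjOn (gridCell b m) (S : Set (Fin n → ℝ))) :
    ∑ x ∈ S, gridWeight α b m j x ≤ (3 ^ n : ℝ≥0∞) ^ (m + 1) := by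
  classical
  induction m generalizing S with
  | zero =>
    rcases S.eq_empty_or_nonempty with rfl | ⟨x₀, hx₀⟩
    · simp
    have hcard : S.card ≤ 3 ^ n := by
      rw [← card_nbrCells (gridCell b 0 x₀)]
      refine Finset.card_le_card_of_injOn _ (fun x hx => ?_) hinj
      simp only [nbrCells, SetLike.mem_coe, Fintype.mem_piFinset]
      intro i
      refine floor_mem_Icc_of_abs_sub_le ?_
      simpa using hdiam x (hS hx) x₀ (hS hx₀) i
    simpa [gridWeight] using (by exact_mod_cast hcard : (S.card : ℝ≥0∞) ≤ 3 ^ n)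
  | succ m ih =>
    obtain ⟨S', hS', hbij⟩ := Set.exists_subset_bijOn (S : Set (Fin n → ℝ)) (gridCell b m)
    lift S' to Finset (Fin n → ℝ) using S.finite_toSet.subset hS'
    have hfib : ∀ z ∈ S', ∑ x ∈ S with gridCell b m x = gridCell b m z, condMass α b m j x ≤
        (3 ^ n : ℝ≥0∞) := by
      intro z hz
      set F := S.filter fun x => gridCell b m x = gridCell b m z with hF
      have hzS : z ∈ S := hS' hz
      set g : (Fin n → ℝ) → Fin n → ℤ := fun x => Function.update (gridCell b (m + 1) x) j
        (gridCell b (m + 1) z j) with hg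
      have hmaps : ∀ x ∈ F, g x ∈ nbrCells (gridCell b (m + 1) z) := by
        intro x hx
        obtain ⟨hxS, hxz⟩ := Finset.mem_filter.1 hx
        simp only [nbrCells, Fintype.mem_piFinset]
        intro i
        by_cases hij : i = j
        · subst hij; simp [hg]
        · simp only [hg, Function.update_of_ne hij]
          refine floor_mem_Icc_of_abs_sub_le ?_
          have h1 := hcone x (hS hxS) z (hS hzS) i hij
          have h2 : |(b : ℝ) ^ m * x j - b ^ m * z j| < 1 :=
            Int.abs_sub_lt_one_of_floor_eq_floor (congrFun hxz j)
          rw [← mul_sub, abs_mul, abs_of_nonneg (by positivity)] at h2 ⊢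
          calc (b : ℝ) ^ (m + 1) * |x i - z i| = b ^ m * (b * |x i - z i|) := by ring
            _ ≤ b ^ m * |x j - z j| := by gcongr
            _ ≤ 1 := h2.le
      rw [← Finset.sum_fiberwise_of_maps_to hmaps]
      calc _ ≤ ∑ c ∈ nbrCells (gridCell b (m + 1) z), (1 : ℝ≥0∞) := by
            refine Finset.sum_le_sum fun c _ => sum_condMass_le_one α j _ ?_ ?_ ?_
            · refine hinj.mono fun x hx => ?_
              exact (Finset.mem_filter.1 (Finset.mem_filter.1 hx).1).1
            · intro x hx y hy
              rw [(Finset.mem_filter.1 (Finset.mem_filter.1 hx).1).2,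
                (Finset.mem_filter.1 (Finset.mem_filter.1 hy).1).2]
            · intro x hx y hy i hi
              have := ((Finset.mem_filter.1 hx).2.trans (Finset.mem_filter.1 hy).2.symm)
              simpa [hg, Function.update_of_ne hi] using congrFun this i
        _ = 3 ^ n := by simp [card_nbrCells]
    have hmaps : ∀ x ∈ S, gridCell b m x ∈ S'.image (gridCell b m) := by
      intro x hx
      have := hbij.image_eq.symm ▸ Set.mem_image_of_mem (gridCell b m) hx
      simpa using this
    calc ∑ x ∈ S, gridWeight α b (m + 1) j x
        = ∑ z ∈ S', ∑ x ∈ S with gridCell b m x = gridCell b m z,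
            gridWeight α b (m + 1) j x := by
          rw [← Finset.sum_fiberwise_of_maps_to hmaps, Finset.sum_image hbij.injOn]
      _ = ∑ z ∈ S', gridWeight α b m j z *
            ∑ x ∈ S with gridCell b m x = gridCell b m z, condMass α b m j x := by
          refine Finset.sum_congr rfl fun z _ => ?_
          rw [Finset.mul_sum]
          refine Finset.sum_congr rfl fun x hx => ?_
          rw [← gridWeight_congr α hb j (Finset.mem_filter.1 hx).2]
          simp [gridWeight, Finset.prod_range_succ]
      _ ≤ ∑ z ∈ S', gridWeight α b m j z * 3 ^ n := by
          gcongr with z hz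
          exact hfib z hz
      _ ≤ (3 ^ n) ^ (m + 1) * 3 ^ n := by
          rw [← Finset.sum_mul]
          gcongr
          exact ih S' (hS'.trans hS) hbij.injOn
      _ = _ := by ring

/-- A set whose chords are nearly parallel to the `j`-th axis has small projection, if it is
covered by cubes of large weight in the `j`-th direction. -/
lemma volume_proj_le (α : Measure (Fin n → ℝ)) (hb : 0 < b) (κ : ℝ≥0∞)
    (hdiam : ∀ x ∈ Γ, ∀ y ∈ Γ, ∀ i, |x i - y i| ≤ 1)
    (hcone : ∀ x ∈ Γ, ∀ y ∈ Γ, ∀ i ≠ j, b * |x i - y i| ≤ |x j - y j|)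
    (hΓ : ∀ x ∈ Γ, ∃ m, ((2 * 3 ^ n / b : ℝ≥0∞)) ^ m ≤ κ * gridWeight α b m j x) :
    volume ((fun x : Fin n → ℝ => x j) '' Γ) ≤ κ * (2 * 3 ^ n) := by
  have hb0 : (b : ℝ≥0∞) ≠ 0 := by exact_mod_cast hb.ne'
  have hbt : (b : ℝ≥0∞) ≠ ⊤ := ENNReal.natCast_ne_top b
  have h3 : (3 ^ n : ℝ≥0∞) ≠ 0 := by positivity
  have h3t : (3 ^ n : ℝ≥0∞) ≠ ⊤ := ENNReal.pow_ne_top (by simp)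
  have hlevel : ∀ m, volume ((fun x : Fin n → ℝ => x j) ''
      {x ∈ Γ | (2 * 3 ^ n / b : ℝ≥0∞) ^ m ≤ κ * gridWeight α b m j x}) ≤
        κ * 3 ^ n * 2⁻¹ ^ m := by
    intro m
    set T := {x ∈ Γ | (2 * 3 ^ n / b : ℝ≥0∞) ^ m ≤ κ * gridWeight α b m j x} with hT
    obtain ⟨S, hST, hbij⟩ := Set.exists_subset_bijOn T (gridCell b m)
    have hScount : S.Countable := Set.MapsTo.countable_of_injOn (mapsTo_univ _ _) hbij.injOn
      (Set.to_countable _)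
    have hcov : (fun x : Fin n → ℝ => x j) '' T ⊆ ⋃ x ∈ S,
        Ico ((gridCell b m x j : ℝ) / b ^ m) ((gridCell b m x j + 1 : ℝ) / b ^ m) := by
      rintro _ ⟨y, hy, rfl⟩
      obtain ⟨x, hx, hxy⟩ := hbij.surjOn (Set.mem_image_of_mem _ hy)
      refine mem_iUnion₂.2 ⟨x, hx, ?_⟩
      have hpos : (0 : ℝ) < b ^ m := by positivity
      rw [hxy, mem_Ico, div_le_iff₀ hpos, lt_div_iff₀ hpos, mul_comm]
      exact ⟨Int.floor_le _, Int.lt_floor_add_one _⟩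
    have hvol : ∀ x : Fin n → ℝ, volume (Ico ((gridCell b m x j : ℝ) / b ^ m)
        ((gridCell b m x j + 1 : ℝ) / b ^ m)) = (b : ℝ≥0∞)⁻¹ ^ m := by
      intro x
      have hpos : (0 : ℝ) < b := by positivity
      rw [Real.volume_Ico, ← _root_.sub_div, add_sub_cancel_left, one_div, ← inv_pow,
        ENNReal.ofReal_pow (by positivity), ENNReal.ofReal_inv_of_pos hpos, ENNReal.ofReal_natCast]
    have hbnd : ∀ x ∈ T, (b : ℝ≥0∞)⁻¹ ^ m ≤ κ * (2 * 3 ^ n)⁻¹ ^ m * gridWeight α b m j x := by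
      intro x hx
      have h23 : (2 * 3 ^ n : ℝ≥0∞) ≠ 0 := by positivity
      have h23t : (2 * 3 ^ n : ℝ≥0∞) ≠ ⊤ := ENNReal.mul_ne_top (by simp) h3t
      calc (b : ℝ≥0∞)⁻¹ ^ m = (2 * 3 ^ n)⁻¹ ^ m * (2 * 3 ^ n / b) ^ m := by
            rw [← mul_pow, div_eq_mul_inv, ← mul_assoc, ENNReal.inv_mul_cancel h23 h23t, one_mul]
        _ ≤ (2 * 3 ^ n)⁻¹ ^ m * (κ * gridWeight α b m j x) := by gcongr; exact hx.2
        _ = _ := by ring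
    have := hScount.to_subtype
    calc volume ((fun x : Fin n → ℝ => x j) '' T)
        ≤ ∑' x : S, (b : ℝ≥0∞)⁻¹ ^ m := by
          refine (measure_mono hcov).trans ((measure_biUnion_le _ hScount _).trans_eq ?_)
          simp only [hvol]
      _ ≤ ∑' x : S, κ * (2 * 3 ^ n)⁻¹ ^ m * gridWeight α b m j x :=
          ENNReal.tsum_le_tsum fun x => hbnd x (hST x.2)
      _ = κ * (2 * 3 ^ n)⁻¹ ^ m * ∑' x : S, gridWeight α b m j x := ENNReal.tsum_mul_left
      _ ≤ κ * (2 * 3 ^ n)⁻¹ ^ m * (3 ^ n) ^ (m + 1) := by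
          gcongr
          rw [ENNReal.tsum_eq_iSup_sum]
          refine iSup_le fun s => ?_
          have := sum_gridWeight_le α hb hdiam hcone m (s.map (Function.Embedding.subtype _))
            (by intro x hx; obtain ⟨y, -, rfl⟩ := Finset.mem_map.1 hx; exact (hST y.2).1)
            (hbij.injOn.mono (by
              intro x hx; obtain ⟨y, -, rfl⟩ := Finset.mem_map.1 hx; exact y.2))
          simpa using this
      _ = κ * 3 ^ n * 2⁻¹ ^ m := by
          rw [ENNReal.mul_inv (by simp) (by simp), mul_pow, pow_succ]
          calc _ = κ * 3 ^ n * 2⁻¹ ^ m * ((3 ^ n)⁻¹ * 3 ^ n) ^ m := by ring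
            _ = _ := by rw [ENNReal.inv_mul_cancel h3 h3t, one_pow, mul_one]
  calc volume ((fun x : Fin n → ℝ => x j) '' Γ)
      ≤ volume (⋃ m, (fun x : Fin n → ℝ => x j) ''
          {x ∈ Γ | (2 * 3 ^ n / b : ℝ≥0∞) ^ m ≤ κ * gridWeight α b m j x}) := by
        rw [← image_iUnion]
        refine measure_mono (image_mono fun x hx => ?_)
        obtain ⟨m, hm⟩ := hΓ x hx
        exact mem_iUnion.2 ⟨m, hx, hm⟩
    _ ≤ ∑' m, κ * 3 ^ n * 2⁻¹ ^ m := (measure_iUnion_le _).trans (ENNReal.tsum_le_tsum hlevel)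
    _ = κ * (2 * 3 ^ n) := by
        rw [ENNReal.tsum_mul_left, ENNReal.tsum_geometric, ENNReal.one_sub_inv_two, inv_inv]
        ring

/-- A set of vanishing `s`-dimensional Hausdorff measure carries measures of arbitrarily small total
mass that give every point of the set a cube of mass comparable to the `s`-th power of its side. -/
lemma exists_measure_of_hausdorffMeasure_eq_zero {s : ℝ≥0} {b : ℕ} (hb : 2 ≤ b) {c : ℝ≥0∞}
    (hc1 : c < 1) (hc : c ≤ (b : ℝ≥0∞)⁻¹ ^ (s : ℝ)) {N : Set (Fin n → ℝ)} (hN : μH[s] N = 0)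
    {η : ℝ≥0∞} (hη : η ≠ 0) :
    ∃ α : Measure (Fin n → ℝ), α univ < η ∧
      ∀ x ∈ N, ∃ m, c ^ m ≤ α {y | gridCell b m y = gridCell b m x} := by
  have hb0 : (b : ℝ≥0∞) ≠ 0 := by exact_mod_cast (by omega : b ≠ 0)
  have hbt : (b : ℝ≥0∞) ≠ ⊤ := ENNReal.natCast_ne_top b
  have h3 : (3 ^ n : ℝ≥0∞) ≠ 0 := by positivity
  have h3t : (3 ^ n : ℝ≥0∞) ≠ ⊤ := ENNReal.pow_ne_top (by simp)
  set B : ℝ≥0∞ := (b : ℝ≥0∞) ^ (s : ℝ) with hB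
  have hB0 : B ≠ 0 := by simp [hB, hb0, hbt]
  have hBt : B ≠ ⊤ := ENNReal.rpow_ne_top_of_nonneg s.2 hbt
  set η' : ℝ≥0∞ := η / 3 ^ n / 2 with hη'
  have hη0 : η' ≠ 0 := by simp [hη', hη, h3t]
  obtain ⟨ε, hε0, hε⟩ := ENNReal.exists_pos_sum_of_countable' hη0 ℕ
  have hηB : η' / B ≠ 0 := by simp [hη0, hBt]
  obtain ⟨t, hNt, htd, hts⟩ : ∃ t : ℕ → Set (Fin n → ℝ), N ⊆ ⋃ k, t k ∧
      (∀ k, ediam (t k) ≤ 1) ∧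
      ∑' k, ⨆ _ : (t k).Nonempty, ediam (t k) ^ (s : ℝ) < η' / B := by
    have h1 : (⨅ (t : ℕ → Set (Fin n → ℝ)) (_ : N ⊆ ⋃ k, t k) (_ : ∀ k, ediam (t k) ≤ 1),
        ∑' k, ⨆ _ : (t k).Nonempty, ediam (t k) ^ (s : ℝ)) < η' / B := by
      refine lt_of_le_of_lt ?_ (pos_iff_ne_zero.2 hηB)
      rw [Measure.hausdorffMeasure_apply] at hN
      rw [← hN]
      exact le_iSup₂ (f := fun (r : ℝ≥0∞) (_ : 0 < r) =>
        ⨅ (t : ℕ → Set (Fin n → ℝ)) (_ : N ⊆ ⋃ k, t k) (_ : ∀ k, ediam (t k) ≤ r),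
        ∑' k, ⨆ _ : (t k).Nonempty, ediam (t k) ^ (s : ℝ)) 1 zero_lt_one
    simpa only [iInf_lt_iff, exists_prop] using h1
  have hbinv : (b : ℝ≥0∞)⁻¹ < 1 := by
    rw [ENNReal.inv_lt_one]; exact_mod_cast hb
  have hlev : ∀ k, ∃ m, ediam (t k) ≤ (b : ℝ≥0∞)⁻¹ ^ m ∧
      c ^ m ≤ B * ediam (t k) ^ (s : ℝ) + ε k := by
    intro k
    by_cases hd : ediam (t k) = 0
    · have : Tendsto (fun m => c ^ m) atTop (𝓝 0) := ENNReal.tendsto_pow_atTop_nhds_zero_of_lt_one hc1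
      obtain ⟨m, hm⟩ := (this.eventually (gt_mem_nhds (hε0 k))).exists
      exact ⟨m, by simp [hd], hm.le.trans le_add_self⟩
    · have hdt : ediam (t k) ≠ ⊤ := ne_top_of_le_ne_top ENNReal.one_ne_top (htd k)
      obtain ⟨m, hm1, hm2⟩ := exists_nat_pow_near_of_lt_one
        (x := (ediam (t k)).toReal) (y := ((b : ℝ≥0∞)⁻¹).toReal)
        (ENNReal.toReal_pos hd hdt) (by simpa using ENNReal.toReal_mono (by simp) (htd k))
        (ENNReal.toReal_pos (by simp) (by simp [hb0]))
        (by simpa using (ENNReal.toReal_lt_toReal (by simp [hb0]) (by simp)).2 hbinv)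
      have hbt' : ∀ m : ℕ, (b : ℝ≥0∞)⁻¹ ^ m ≠ ⊤ := fun m => ENNReal.pow_ne_top (by simp [hb0])
      rw [← ENNReal.toReal_pow, ENNReal.toReal_lt_toReal (hbt' _) hdt] at hm1
      rw [← ENNReal.toReal_pow, ENNReal.toReal_le_toReal hdt (hbt' _)] at hm2
      refine ⟨m, hm2, le_trans ?_ le_self_add⟩
      calc c ^ m ≤ ((b : ℝ≥0∞)⁻¹ ^ (s : ℝ)) ^ m := by gcongr
        _ = B * ((b : ℝ≥0∞)⁻¹ ^ (m + 1)) ^ (s : ℝ) := by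
          have : B * (b : ℝ≥0∞)⁻¹ ^ (s : ℝ) = 1 := by
            rw [ENNReal.inv_rpow, hB, ENNReal.mul_inv_cancel hB0 hBt]
          rw [← ENNReal.rpow_natCast ((b : ℝ≥0∞)⁻¹) (m + 1), ← ENNReal.rpow_mul,
            mul_comm ((m + 1 : ℕ) : ℝ), ENNReal.rpow_mul, ENNReal.rpow_natCast, pow_succ',
            ← mul_assoc, this, one_mul]
        _ ≤ _ := by gcongr
  choose m hm1 hm2 using hlev
  let ctr : (k : ℕ) → (Fin n → ℤ) → (Fin n → ℝ) := fun k q i => q i / (b : ℝ) ^ m k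
  have hctr : ∀ k q, gridCell b (m k) (ctr k q) = q := by
    intro k q
    have hpos : (b : ℝ) ^ m k ≠ 0 := by
      have : (0 : ℝ) < b := by exact_mod_cast (by omega : 0 < b)
      positivity
    funext i
    simp only [gridCell, ctr]
    rw [mul_div_cancel₀ _ hpos, Int.floor_intCast]
  have hpt : ∀ k, ∃ y, (t k).Nonempty → y ∈ t k := fun k => by
    rcases (t k).eq_empty_or_nonempty with h | ⟨y, hy⟩
    · exact ⟨0, fun h' => absurd h h'.ne_empty⟩
    · exact ⟨y, fun _ => hy⟩
  choose y hy using hpt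
  let w : ℕ → ℝ≥0∞ := fun k => ⨆ _ : (t k).Nonempty, c ^ m k
  have hw : ∀ k, w k ≤ B * (⨆ _ : (t k).Nonempty, ediam (t k) ^ (s : ℝ)) + ε k := by
    intro k
    refine iSup_le fun h => ?_
    rw [iSup_pos h]
    exact hm2 k
  refine ⟨Measure.sum fun k => w k • ∑ q ∈ nbrCells (gridCell b (m k) (y k)),
    Measure.dirac (ctr k q), ?_, ?_⟩
  · calc (Measure.sum fun k => w k • ∑ q ∈ nbrCells (gridCell b (m k) (y k)),
          Measure.dirac (ctr k q)) univ = (∑' k, w k) * 3 ^ n := by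
          rw [Measure.sum_apply _ MeasurableSet.univ, ← ENNReal.tsum_mul_right]
          refine tsum_congr fun k => ?_
          simp [Measure.finsetSum_apply, card_nbrCells]
      _ ≤ (B * (∑' k, ⨆ _ : (t k).Nonempty, ediam (t k) ^ (s : ℝ)) + ∑' k, ε k) * 3 ^ n := by
          rw [← ENNReal.tsum_mul_left, ← ENNReal.tsum_add]
          gcongr with k
          exact hw k
      _ < (B * (η' / B) + η') * 3 ^ n := by
          refine (ENNReal.mul_lt_mul_iff_left h3 h3t).2 (ENNReal.add_lt_add ?_ hε)
          exact (ENNReal.mul_lt_mul_iff_right hB0 hBt).2 hts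
      _ = η := by
          rw [ENNReal.mul_div_cancel hB0 hBt, hη', ENNReal.add_halves,
            ENNReal.div_mul_cancel h3 h3t]
  · intro x hx
    obtain ⟨k, hk⟩ := mem_iUnion.1 (hNt hx)
    have hne : (t k).Nonempty := ⟨x, hk⟩
    refine ⟨m k, ?_⟩
    have hmem : gridCell b (m k) x ∈ nbrCells (gridCell b (m k) (y k)) := by
      simp only [nbrCells, Fintype.mem_piFinset]
      intro i
      refine floor_mem_Icc_of_abs_sub_le ?_
      have hpos : (0 : ℝ) < b := by exact_mod_cast (by omega : 0 < b)
      have h1 : edist x (y k) ≤ (b : ℝ≥0∞)⁻¹ ^ m k :=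
        (edist_le_ediam_of_mem hk (hy k hne)).trans (hm1 k)
      rw [edist_dist, ← ENNReal.ofReal_natCast, ← ENNReal.ofReal_inv_of_pos hpos,
        ← ENNReal.ofReal_pow (by positivity), ENNReal.ofReal_le_ofReal_iff (by positivity)] at h1
      have h2 : |x i - y k i| ≤ ((b : ℝ)⁻¹) ^ m k := (dist_le_pi_dist x (y k) i).trans h1
      rw [← mul_sub, abs_mul, abs_of_nonneg (by positivity)]
      calc (b : ℝ) ^ m k * |x i - y k i| ≤ b ^ m k * (b : ℝ)⁻¹ ^ m k := by gcongr
        _ = 1 := by rw [← mul_pow, mul_inv_cancel₀ hpos.ne', one_pow]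
    have hms : MeasurableSet {z : Fin n → ℝ | gridCell b (m k) z = gridCell b (m k) x} :=
      measurable_gridCell b (m k) (measurableSet_singleton _)
    calc c ^ m k = w k * (Measure.dirac (ctr k (gridCell b (m k) x)))
          {z | gridCell b (m k) z = gridCell b (m k) x} := by
          rw [Measure.dirac_apply_of_mem (show ctr k (gridCell b (m k) x) ∈
            {z | gridCell b (m k) z = gridCell b (m k) x} from hctr k _), mul_one]
          exact (iSup_pos (f := fun _ : (t k).Nonempty => c ^ m k) hne).symm
      _ ≤ (w k • ∑ q ∈ nbrCells (gridCell b (m k) (y k)), Measure.dirac (ctr k q))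
          {z | gridCell b (m k) z = gridCell b (m k) x} := by
          rw [Measure.smul_apply, Measure.finsetSum_apply, smul_eq_mul]
          gcongr
          exact Finset.single_le_sum (f := fun q => Measure.dirac (ctr k q)
            {z | gridCell b (m k) z = gridCell b (m k) x}) (fun _ _ => zero_le) hmem
      _ ≤ _ := by
          rw [Measure.sum_apply _ hms]
          exact ENNReal.le_tsum (f := fun k' => (w k' • ∑ q ∈ nbrCells (gridCell b (m k') (y k')),
            Measure.dirac (ctr k' q)) {z | gridCell b (m k) z = gridCell b (m k) x}) k

/-- If `s < n`, a set of vanishing `s`-dimensional Hausdorff measure in `ℝⁿ` is covered by `n` Borel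
sets, the `j`-th of which meets every set with chords nearly parallel to the `j`-th axis in length
zero. -/
theorem exists_cover_directionally_null (n : ℕ) (s : ℝ≥0) (hs : s < n) :
    ∃ b : ℕ, 0 < b ∧ ∀ N : Set (Fin n → ℝ), μH[s] N = 0 →
      ∃ T : Fin n → Set (Fin n → ℝ), (∀ j, MeasurableSet (T j)) ∧ N ⊆ ⋃ j, T j ∧
        ∀ j, ∀ Γ ⊆ T j, (∀ x ∈ Γ, ∀ y ∈ Γ, ∀ i, |x i - y i| ≤ 1) →
          (∀ x ∈ Γ, ∀ y ∈ Γ, ∀ i ≠ j, b * |x i - y i| ≤ |x j - y j|) →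
          volume ((fun x : Fin n → ℝ => x j) '' Γ) = 0 := by
  have h3 : (3 ^ n : ℝ≥0∞) ≠ 0 := by positivity
  have h3t : (3 ^ n : ℝ≥0∞) ≠ ⊤ := ENNReal.pow_ne_top (by simp)
  obtain ⟨b, hb2, hbs⟩ : ∃ b : ℕ, 2 * 3 ^ n < b ∧
      (2 * 3 ^ n : ℝ≥0∞) ^ n ≤ (b : ℝ≥0∞) ^ ((n : ℝ) - s) := by
    have hpos : 0 < (n : ℝ) - s := by
      have : (s : ℝ) < n := by exact_mod_cast hs
      linarith
    have ht : Tendsto (fun k : ℕ => (k : ℝ≥0∞) ^ ((n : ℝ) - s)) atTop (𝓝 ⊤) := by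
      have := (ENNReal.continuous_rpow_const (y := (n : ℝ) - s)).tendsto ⊤
      rw [ENNReal.top_rpow_of_pos hpos] at this
      exact this.comp ENNReal.tendsto_nat_nhds_top
    have hlt : (2 * 3 ^ n : ℝ≥0∞) ^ n < ⊤ :=
      ENNReal.pow_lt_top (ENNReal.mul_lt_top (by simp) h3t.lt_top)
    obtain ⟨b, h1, h2⟩ := ((ht.eventually (lt_mem_nhds hlt)).and
      (eventually_gt_atTop (2 * 3 ^ n))).exists
    exact ⟨b, h2, h1.le⟩
  have hb0 : 0 < b := (Nat.zero_le _).trans_lt hb2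
  have hbe : (b : ℝ≥0∞) ≠ 0 := by exact_mod_cast hb0.ne'
  have hbt : (b : ℝ≥0∞) ≠ ⊤ := ENNReal.natCast_ne_top b
  refine ⟨b, hb0, fun N hN => ?_⟩
  set a : ℝ≥0∞ := 2 * 3 ^ n / b with ha
  have ha0 : a ≠ 0 := by simp [ha, hbt]
  have ha1 : a < 1 := by
    rw [ha, ENNReal.div_lt_iff (Or.inl hbe) (Or.inl hbt), one_mul]
    exact_mod_cast hb2
  have han : a ^ n ≤ (b : ℝ≥0∞)⁻¹ ^ (s : ℝ) := by
    rw [ha, ENNReal.inv_rpow, ← ENNReal.rpow_neg, div_eq_mul_inv, mul_pow]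
    calc (2 * 3 ^ n : ℝ≥0∞) ^ n * (b : ℝ≥0∞)⁻¹ ^ n
        ≤ (b : ℝ≥0∞) ^ ((n : ℝ) - s) * (b : ℝ≥0∞)⁻¹ ^ n := by gcongr
      _ = (b : ℝ≥0∞) ^ (-(s : ℝ)) := by
        rw [← ENNReal.rpow_natCast, ENNReal.inv_rpow, ← ENNReal.rpow_neg,
          ← ENNReal.rpow_add _ _ hbe hbt]
        congr 1
        ring
  have hn : n ≠ 0 := by rintro rfl; simp at hs
  have hex : ∀ κ : ℝ≥0∞, κ ≠ 0 → κ ≠ ⊤ → ∃ α : Measure (Fin n → ℝ),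
      ∀ x ∈ N, ∃ j : Fin n, ∃ m, a ^ m ≤ κ * gridWeight α b m j x := by
    intro κ hκ hκt
    obtain ⟨α, hα, hαN⟩ := exists_measure_of_hausdorffMeasure_eq_zero (b := b)
      (by have := Nat.one_le_pow n 3 (by simp); omega)
      (c := a ^ n) (pow_lt_one₀ zero_le ha1 hn) han hN (pow_ne_zero n hκ)
    have : IsFiniteMeasure α := ⟨hα.trans (ENNReal.pow_lt_top hκt.lt_top)⟩
    refine ⟨α, fun x hx => ?_⟩
    obtain ⟨m, hm⟩ := hαN x hx
    by_contra! hcon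
    have h1 : ∏ j : Fin n, κ * gridWeight α b m j x ≤ ∏ _j : Fin n, a ^ m :=
      Finset.prod_le_prod' fun j _ => (hcon j m).le
    rw [Finset.prod_mul_distrib, Finset.prod_const, Finset.prod_const, Finset.card_univ,
      Fintype.card_fin] at h1
    have h2 : (a ^ m) ^ n * κ ^ n ≤ (a ^ m) ^ n * α univ :=
      calc (a ^ m) ^ n * κ ^ n = κ ^ n * (a ^ n) ^ m := by ring
        _ ≤ κ ^ n * ((∏ j : Fin n, gridWeight α b m j x) * α univ) := by
          gcongr
          exact hm.trans (measure_gridCell_le α hb0 m x)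
        _ = (κ ^ n * ∏ j : Fin n, gridWeight α b m j x) * α univ := by ring
        _ ≤ _ := by gcongr
    have h3 : (a ^ m) ^ n ≠ ⊤ :=
      ENNReal.pow_ne_top (ENNReal.pow_ne_top (ne_top_of_lt ha1))
    rw [ENNReal.mul_le_mul_iff_right (pow_ne_zero _ (pow_ne_zero _ ha0)) h3] at h2
    exact h2.not_gt hα
  choose α hα using fun i : ℕ => hex (2⁻¹ ^ i) (by simp) (ENNReal.pow_ne_top (by simp))
  let T : ℕ → Fin n → Set (Fin n → ℝ) := fun i j =>
    ⋃ m, {x | a ^ m ≤ 2⁻¹ ^ i * gridWeight (α i) b m j x}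
  refine ⟨fun j => limsup (fun i => T i j) atTop, fun j => ?_, fun x hx => ?_, ?_⟩
  · exact MeasurableSet.measurableSet_limsup fun i => MeasurableSet.iUnion fun m =>
      measurableSet_le_gridWeight _ hb0 m j _ _
  · by_contra hcon
    simp only [mem_iUnion, mem_limsup_iff_frequently_mem, not_exists, not_frequently] at hcon
    obtain ⟨i, hi⟩ := (eventually_all.2 hcon).exists
    obtain ⟨j, m, hjm⟩ := hα i x hx
    exact hi j (mem_iUnion.2 ⟨m, hjm⟩)
  · intro j Γ hΓ hdiam hcone
    refine measure_mono_null (t := limsup (fun i => (fun x : Fin n → ℝ => x j) '' (Γ ∩ T i j)) atTop)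
      ?_ (measure_limsup_atTop_eq_zero ?_)
    · rintro _ ⟨x, hx, rfl⟩
      have := hΓ hx
      rw [mem_limsup_iff_frequently_mem] at this ⊢
      exact this.mono fun i hi => ⟨x, ⟨hx, hi⟩, rfl⟩
    · refine ne_top_of_le_ne_top (b := ∑' i : ℕ, 2⁻¹ ^ i * (2 * 3 ^ n : ℝ≥0∞)) ?_
        (ENNReal.tsum_le_tsum fun i => ?_)
      · rw [ENNReal.tsum_mul_right, ENNReal.tsum_geometric, ENNReal.one_sub_inv_two, inv_inv]
        exact ENNReal.mul_ne_top (by simp) (ENNReal.mul_ne_top (by simp) h3t)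
      · exact volume_proj_le (α i) hb0 _ (fun x hx y hy => hdiam x hx.1 y hy.1)
          (fun x hx y hy => hcone x hx.1 y hy.1) fun x hx => mem_iUnion.1 hx.2

end Grid

section Directions

variable {n : ℕ}

/-- The open cone of vectors nearly parallel to the `j`-th axis. -/
def axisCone (b : ℕ) (j : Fin n) : Set (Fin n → ℝ) := {v | v j ≠ 0 ∧ ∀ i ≠ j, b * |v i| < |v j|}

lemma isOpen_axisCone (b : ℕ) (j : Fin n) : IsOpen (axisCone b j) := by
  have : axisCone b j = {v : Fin n → ℝ | v j ≠ 0} ∩ ⋂ i : Fin n, {v | i ≠ j → b * |v i| < |v j|} := by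
    ext v; simp [axisCone]
  rw [this]
  refine (isOpen_ne_fun (by fun_prop) (by fun_prop)).inter (isOpen_iInter_of_finite fun i => ?_)
  by_cases hi : i = j
  · simp [hi]
  · simpa [hi] using isOpen_lt (by fun_prop) (by fun_prop)

lemma volume_eq_zero_of_expanding {A : Set ℝ} {g : ℝ → ℝ} {K : ℝ≥0}
    (hg : ∀ x ∈ A, ∀ y ∈ A, |x - y| ≤ K * |g x - g y|) (h0 : volume (g '' A) = 0) :
    volume A = 0 := by
  have hinj : Set.InjOn g A := fun x hx y hy hxy => by
    have := hg x hx y hy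
    rw [hxy, sub_self, abs_zero, mul_zero] at this
    exact sub_eq_zero.1 (abs_nonpos_iff.1 this)
  have hinv : ∀ x ∈ A, Function.invFunOn g A (g x) = x := fun x hx => hinj.leftInvOn_invFunOn hx
  have hlip : LipschitzOnWith K (Function.invFunOn g A) (g '' A) := by
    refine LipschitzOnWith.of_dist_le_mul ?_
    rintro _ ⟨x, hx, rfl⟩ _ ⟨y, hy, rfl⟩
    rw [hinv x hx, hinv y hy]
    exact hg x hx y hy
  have himg : A ⊆ Function.invFunOn g A '' (g '' A) := fun x hx =>
    ⟨g x, mem_image_of_mem g hx, hinv x hx⟩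
  refine measure_mono_null himg (le_antisymm ?_ zero_le)
  simpa [hausdorffMeasure_real, h0] using hlip.hausdorffMeasure_image_le zero_le_one

lemma exists_pos_of_hasDerivWithinAt_axisCone {ψ : ℝ → Fin n → ℝ} {v : Fin n → ℝ} {s : Set ℝ}
    {t : ℝ} {b : ℕ} {j : Fin n} (hψ : HasDerivWithinAt ψ v s t) (hv : v ∈ axisCone b j) :
    ∃ η > 0, ∀ᶠ r in 𝓝[s] t, (∀ i ≠ j, b * |ψ r i - ψ t i| ≤ |ψ r j - ψ t j|) ∧
      η * |r - t| ≤ |ψ r j - ψ t j| ∧ ∀ i, |ψ r i - ψ t i| ≤ 1 := by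
  obtain ⟨ε, hε, hε0, hεj⟩ : ∃ ε : ℝ, (∀ i : Fin n, i ≠ j → b * (|v i| + ε) < |v j| - ε) ∧
      0 < ε ∧ 0 < |v j| - ε := by
    have h1 : ∀ i : Fin n, ∀ᶠ ε : ℝ in 𝓝[>] 0, i ≠ j → b * (|v i| + ε) < |v j| - ε := by
      intro i
      by_cases hi : i = j
      · simp [hi]
      · have hc : ContinuousAt (fun ε : ℝ => |v j| - ε - b * (|v i| + ε)) 0 := by fun_prop
        have := hc.eventually (lt_mem_nhds (a := 0) (by simpa using hv.2 i hi))
        filter_upwards [nhdsWithin_le_nhds this] with ε hε _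
        linarith
    have h2 : ∀ᶠ ε : ℝ in 𝓝[>] 0, 0 < |v j| - ε := by
      filter_upwards [nhdsWithin_le_nhds (gt_mem_nhds (abs_pos.2 hv.1))] with ε hε
      linarith
    exact ((eventually_all.2 h1).and (eventually_mem_nhdsWithin.and h2)).exists
  refine ⟨|v j| - ε, hεj, ?_⟩
  have h1 := (hasDerivWithinAt_iff_isLittleO.1 hψ).def hε0
  have h2 : ∀ᶠ r in 𝓝[s] t, dist (ψ r) (ψ t) ≤ 1 :=
    (hψ.continuousWithinAt.eventually (ball_mem_nhds _ zero_lt_one)).mono fun r hr => (le_of_lt hr)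
  filter_upwards [h1, h2] with r hr hr2
  have hcoord : ∀ i, |ψ r i - ψ t i - (r - t) * v i| ≤ ε * |r - t| := fun i =>
    (norm_le_pi_norm (ψ r - ψ t - (r - t) • v) i).trans hr
  have hj : (|v j| - ε) * |r - t| ≤ |ψ r j - ψ t j| := by
    have h3 := hcoord j
    rw [abs_sub_comm] at h3
    have h4 := abs_sub_abs_le_abs_sub ((r - t) * v j) (ψ r j - ψ t j)
    rw [abs_mul] at h4
    linarith
  refine ⟨fun i hi => ?_, hj, fun i => (dist_le_pi_dist (ψ r) (ψ t) i).trans hr2⟩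
  have hi' : |ψ r i - ψ t i| ≤ (|v i| + ε) * |r - t| := by
    have h3 := hcoord i
    have h4 := abs_sub_abs_le_abs_sub (ψ r i - ψ t i) ((r - t) * v i)
    rw [abs_mul] at h4
    linarith
  calc b * |ψ r i - ψ t i| ≤ b * ((|v i| + ε) * |r - t|) := by gcongr
    _ = b * (|v i| + ε) * |r - t| := by ring
    _ ≤ (|v j| - ε) * |r - t| := by gcongr; exact (hε i hi).le
    _ ≤ _ := hj

/-- If `T` meets sets with chords nearly parallel to the `j`-th axis in length zero, then a curve
defined on a subset of `ℝ` spends no time in `T` with derivative nearly parallel to that axis. -/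
lemma volume_hasDerivWithinAt_axisCone_eq_zero {T : Set (Fin n → ℝ)} {b : ℕ} {j : Fin n}
    (hT : ∀ Γ ⊆ T, (∀ x ∈ Γ, ∀ y ∈ Γ, ∀ i, |x i - y i| ≤ 1) →
      (∀ x ∈ Γ, ∀ y ∈ Γ, ∀ i ≠ j, b * |x i - y i| ≤ |x j - y j|) →
      volume ((fun x : Fin n → ℝ => x j) '' Γ) = 0) (ψ : ℝ → Fin n → ℝ) (s : Set ℝ) :
    volume {t ∈ s | ψ t ∈ T ∧ ∃ v ∈ axisCone b j, HasDerivWithinAt ψ v s t} = 0 := by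
  let P : ℕ → ℤ → Set ℝ := fun k l => {t ∈ s | ψ t ∈ T ∧ ⌊((k : ℝ) + 1) * t⌋ = l ∧
    ∀ r ∈ s, (k + 1) * |r - t| < 1 → (∀ i ≠ j, b * |ψ r i - ψ t i| ≤ |ψ r j - ψ t j|) ∧
      |r - t| ≤ (k + 1) * |ψ r j - ψ t j| ∧ ∀ i, |ψ r i - ψ t i| ≤ 1}
  have hsub : {t ∈ s | ψ t ∈ T ∧ ∃ v ∈ axisCone b j, HasDerivWithinAt ψ v s t} ⊆
      ⋃ k, ⋃ l, P k l := by
    rintro t ⟨hts, htT, v, hv, hψ⟩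
    obtain ⟨η, hη, hev⟩ := exists_pos_of_hasDerivWithinAt_axisCone hψ hv
    obtain ⟨δ, hδ, hδs⟩ := Metric.mem_nhdsWithin_iff.1 hev
    obtain ⟨k, hk⟩ := exists_nat_gt (max δ⁻¹ η⁻¹)
    refine mem_iUnion₂.2 ⟨k, _, hts, htT, rfl, fun r hr hrt => ?_⟩
    have hkδ : δ⁻¹ < k + 1 := ((le_max_left _ _).trans_lt hk).trans (lt_add_one _)
    have hkη : η⁻¹ < k + 1 := ((le_max_right _ _).trans_lt hk).trans (lt_add_one _)
    have hrδ : |r - t| < δ := by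
      rw [inv_lt_iff_one_lt_mul₀ hδ] at hkδ
      have : (k + 1 : ℝ) * |r - t| < (k + 1) * δ := by linarith
      exact lt_of_mul_lt_mul_left this (by positivity)
    obtain ⟨h1, h2, h3⟩ := hδs ⟨show dist r t < δ from hrδ, hr⟩
    refine ⟨h1, ?_, h3⟩
    calc |r - t| = η⁻¹ * (η * |r - t|) := by field_simp
      _ ≤ (k + 1) * |ψ r j - ψ t j| := by gcongr
  refine measure_mono_null hsub (measure_iUnion_null fun k => measure_iUnion_null fun l => ?_)
  have hclose : ∀ r ∈ P k l, ∀ t ∈ P k l, ((k : ℝ) + 1) * |r - t| < 1 := by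
    intro r hr t ht
    have := Int.abs_sub_lt_one_of_floor_eq_floor (hr.2.2.1.trans ht.2.2.1.symm)
    rwa [← mul_sub, abs_mul, abs_of_nonneg (by positivity)] at this
  have hP : ∀ r ∈ P k l, ∀ t ∈ P k l, _ := fun r hr t ht =>
    ht.2.2.2 r hr.1 (hclose r hr t ht)
  refine volume_eq_zero_of_expanding (g := fun t => ψ t j) (K := k + 1)
    (fun r hr t ht => by simpa using (hP r hr t ht).2.1) ?_
  have := hT (ψ '' P k l) (by rintro _ ⟨t, ht, rfl⟩; exact ht.2.1)
    (by rintro _ ⟨r, hr, rfl⟩ _ ⟨t, ht, rfl⟩; exact (hP r hr t ht).2.2)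
    (by rintro _ ⟨r, hr, rfl⟩ _ ⟨t, ht, rfl⟩; exact (hP r hr t ht).1)
  rwa [image_image] at this

/-- The linear map `E n → ℝⁿ` with rows `a i`. -/
def rowMap (a : Fin n → E n) (v : E n) : Fin n → ℝ := fun i => ⟪a i, v⟫

lemma continuous_rowMap (a : Fin n → E n) : Continuous (rowMap a) :=
  continuous_pi fun i => by unfold rowMap; fun_prop

lemma continuous_rowMap_left (v : E n) : Continuous fun a : Fin n → E n => rowMap a v :=
  continuous_pi fun i => by unfold rowMap; fun_prop

lemma lipschitzWith_rowMap (a : Fin n → E n) : ∃ K, LipschitzWith K (rowMap a) := by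
  refine ⟨∑ i, ‖a i‖₊, LipschitzWith.of_dist_le_mul fun x y => ?_⟩
  refine (dist_pi_le_iff (by positivity)).2 fun i => ?_
  rw [Real.dist_eq, rowMap, rowMap, ← inner_sub_right, dist_eq_norm]
  refine (abs_real_inner_le_norm _ _).trans ?_
  gcongr
  exact_mod_cast Finset.single_le_sum (f := fun i => ‖a i‖₊) (fun _ _ => zero_le)
    (Finset.mem_univ i)

lemma HasDerivWithinAt.rowMap_comp (a : Fin n → E n) {f : ℝ → E n} {u : E n} {s : Set ℝ} {t : ℝ}
    (hf : HasDerivWithinAt f u s t) :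
    HasDerivWithinAt (fun r => rowMap a (f r)) (rowMap a u) s t :=
  hasDerivWithinAt_pi.2 fun i =>
    ((innerSL ℝ (a i)).hasFDerivAt.comp_hasDerivWithinAt t hf)

/-- A set of vectors that, for each linear change of coordinates in a dense sequence, misses one of
the cones around the coordinate axes, lies in a hyperplane. -/
lemma exists_orthogonal_of_avoid_axisCone (b : ℕ) (V : Set (E n))
    (hV : ∀ k, ∃ j, ∀ v ∈ V, rowMap (TopologicalSpace.denseSeq (Fin n → E n) k) v ∉ axisCone b j) :
    ∃ w : E n, ‖w‖ = 1 ∧ ∀ v ∈ V, ⟪v, w⟫ = 0 := by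
  by_cases hspan : Submodule.span ℝ V = ⊤
  · exfalso
    obtain ⟨u', hu'V, -, hu'⟩ := Submodule.exists_fun_fin_finrank_span_eq ℝ V
    have hfr : Module.finrank ℝ (Submodule.span ℝ V) = n := by rw [hspan]; simp
    obtain ⟨u, huV, hu⟩ : ∃ u : Fin n → E n, (∀ i, u i ∈ V) ∧ LinearIndependent ℝ u :=
      ⟨u' ∘ Fin.cast hfr.symm, fun i => hu'V _, hu'.comp _ (Fin.cast_injective _)⟩
    let B : Module.Basis (Fin n) ℝ (E n) :=
      Module.Basis.mk hu (by rw [hu.span_eq_top_of_card_eq_finrank' (by simp)])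
    let a : Fin n → E n := fun i =>
      (InnerProductSpace.toDual ℝ (E n)).symm (LinearMap.toContinuousLinearMap (B.coord i))
    have ha : ∀ j, rowMap a (u j) ∈ axisCone b j := by
      intro j
      have h1 : ∀ i, rowMap a (u j) i = if j = i then 1 else 0 := by
        intro i
        have : u j = B j := by simp [B]
        simp only [rowMap, a, InnerProductSpace.toDual_symm_apply, this]
        simp [Finsupp.single_apply]
      refine ⟨by simp [h1], fun i hi => by simp [h1, hi.symm]⟩
    have hopen : IsOpen {a : Fin n → E n | ∀ j, rowMap a (u j) ∈ axisCone b j} := by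
      simp only [ofPred_forall]
      exact isOpen_iInter_of_finite fun j =>
        (isOpen_axisCone b j).preimage (continuous_rowMap_left (u j))
    obtain ⟨_, hk, k, rfl⟩ :=
      (TopologicalSpace.denseRange_denseSeq (Fin n → E n)).inter_open_nonempty _ hopen ⟨a, ha⟩
    obtain ⟨j, hj⟩ := hV k
    exact hj (u j) (huV j) (hk j)
  · have hne : (Submodule.span ℝ V)ᗮ ≠ ⊥ := fun h => hspan (Submodule.orthogonal_eq_bot_iff.1 h)
    obtain ⟨w, hw, hw0⟩ := Submodule.exists_mem_ne_zero_of_ne_bot hne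
    refine ⟨‖w‖⁻¹ • w, norm_smul_inv_norm hw0, fun v hv => ?_⟩
    rw [inner_smul_right, (Submodule.mem_orthogonal _ _).1 hw v (Submodule.subset_span hv), mul_zero]

end Directions

section StarUpperGradients

lemma eventually_le_of_lipAt_lt {g : X → ℝ} {K : ℝ≥0} (hg : LipschitzWith K g) {x : X} {c : ℝ}
    (h : lipAt g x < c) : ∀ᶠ y in 𝓝 x, |g y - g x| ≤ c * dist y x := by
  have hK : ∀ r > 0, ∀ y ∈ closedBall x r, |g y - g x| / r ≤ K := fun r hr y hy => by
    rw [div_le_iff₀ hr]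
    exact (hg.dist_le_mul y x).trans (by gcongr; exact hy)
  have hbdd : IsBoundedUnder (· ≤ ·) (𝓝[>] (0 : ℝ))
      fun r : ℝ => sSup ((fun y => |g y - g x| / r) '' closedBall x r) := by
    refine isBoundedUnder_of_eventually_le (a := (K : ℝ)) ?_
    filter_upwards [eventually_mem_nhdsWithin] with r hr
    exact Real.sSup_le (by rintro _ ⟨y, hy, rfl⟩; exact hK r hr y hy) K.2
  obtain ⟨ε, hε, hεr⟩ := mem_nhdsGT_iff_exists_Ioo_subset.1 (eventually_lt_of_limsup_lt h hbdd)
  filter_upwards [ball_mem_nhds x hε] with y hy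
  rcases eq_or_ne y x with rfl | hyx
  · simp
  · have hr : 0 < dist y x := dist_pos.2 hyx
    rw [← div_le_iff₀ hr]
    have hbdd : BddAbove ((fun z => |g z - g x| / dist y x) '' closedBall x (dist y x)) :=
      ⟨K, by rintro _ ⟨z, hz, rfl⟩; exact hK _ hr z hz⟩
    exact (le_csSup hbdd (mem_image_of_mem _ (mem_closedBall.2 le_rfl))).trans (hεr ⟨hr, hy⟩).le

lemma measurableSet_isCompact_subset_iUnion {α Y ι : Type*} [MeasurableSpace α]
    [TopologicalSpace Y] [Countable ι] {Z : Set Y} (hZ : IsCompact Z) {O : ι → Set Y}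
    (hO : ∀ i, IsOpen (O i)) {M : ι → Set α} (hM : ∀ i, MeasurableSet (M i)) :
    MeasurableSet {x | Z ⊆ ⋃ i ∈ {i | x ∈ M i}, O i} := by
  have : {x | Z ⊆ ⋃ i ∈ {i | x ∈ M i}, O i} =
      ⋃ F ∈ {F : Finset ι | Z ⊆ ⋃ i ∈ F, O i}, ⋂ i ∈ F, M i := by
    ext x
    simp only [mem_ofPred_eq, mem_iUnion₂, mem_iInter₂, exists_prop]
    constructor
    · intro hx
      obtain ⟨F, hF, hfin, hcov⟩ := hZ.elim_finite_subcover_image (fun i _ => hO i) hx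
      refine ⟨hfin.toFinset, by simpa using hcov, fun i hi => hF (by simpa using hi)⟩
    · rintro ⟨F, hF, hx⟩
      exact hF.trans (biUnion_subset_biUnion_left hx)
  rw [this]
  exact MeasurableSet.biUnion (Set.to_countable _) fun F _ =>
    MeasurableSet.biInter (Set.to_countable _) fun i _ => hM i

lemma Fragment.isCompact_dom (γ : Fragment X) : IsCompact γ.dom :=
  γ.1.isCompact.image continuous_fst

lemma ae_restrict_accPt (s : Set ℝ) (hs : MeasurableSet s) :
    ∀ᵐ t ∂volume.restrict s, AccPt t (𝓟 s) := by
  rw [ae_restrict_iff' hs]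
  filter_upwards [measure_eq_zero_iff_ae_notMem.1
    ((countable_setOfPred_isolated_right_within (s := s)).measure_zero volume)] with t ht hts
  refine accPt_principal_iff_nhdsWithin.2 (NeBot.mono ⟨fun h => ht ⟨hts, h⟩⟩ (nhdsWithin_mono _ ?_))
  exact fun r hr => ⟨hr.1, (mem_Ioi.1 hr.2).ne'⟩

lemma norm_le_of_hasDerivWithinAt_of_lipschitzOnWith {F : Type*} [NormedAddCommGroup F]
    [NormedSpace ℝ F] {g : ℝ → F} {u : F} {s : Set ℝ} {t : ℝ} {K : ℝ≥0} (ht : t ∈ s)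
    (hacc : AccPt t (𝓟 s)) (hg : LipschitzOnWith K g s) (hu : HasDerivWithinAt g u s t) :
    ‖u‖ ≤ K := by
  have : (𝓝[s \ {t}] t).NeBot := accPt_principal_iff_nhdsWithin.1 hacc
  refine le_of_tendsto (hasDerivWithinAt_iff_tendsto_slope.1 hu).norm ?_
  filter_upwards [eventually_mem_nhdsWithin] with r hr
  rw [slope_def_module, norm_smul, norm_inv, inv_mul_le_iff₀ (norm_pos_iff.2 (sub_ne_zero.2 hr.2)),
    mul_comm, ← dist_eq_norm, ← dist_eq_norm]
  exact hg.dist_le_mul r hr.1 t ht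

variable {n : ℕ}

/-- The points `x` such that every vector of norm at most `K` with `⟪v, w⟫` of size at least `ε`
lies in one of the cones that are forbidden at `φ x`. -/
def narrowSet (φ : X → E n) (K : ℝ) (b : ℕ) (T : ℕ → Fin n → Set (Fin n → ℝ)) (w : E n) (ε : ℝ) :
    Set X :=
  {x | {v : E n | ‖v‖ ≤ K ∧ ε ≤ |⟪v, w⟫|} ⊆
    ⋃ p ∈ {p : ℕ × Fin n |
      x ∈ {x | rowMap (TopologicalSpace.denseSeq (Fin n → E n) p.1) (φ x) ∈ T p.1 p.2}},
      rowMap (TopologicalSpace.denseSeq (Fin n → E n) p.1) ⁻¹' axisCone b p.2}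

lemma measurableSet_narrowSet [MeasurableSpace X] [BorelSpace X] {φ : X → E n} (hφ : Continuous φ)
    (K : ℝ) (b : ℕ) {T : ℕ → Fin n → Set (Fin n → ℝ)} (hT : ∀ k j, MeasurableSet (T k j)) (w : E n)
    (ε : ℝ) : MeasurableSet (narrowSet φ K b T w ε) := by
  unfold narrowSet
  generalize TopologicalSpace.denseSeq (Fin n → E n) = d
  have hZ : IsCompact {v : E n | ‖v‖ ≤ K ∧ ε ≤ |⟪v, w⟫|} := by
    refine (isCompact_closedBall (0 : E n) K).of_isClosed_subset ?_ fun v hv => by simpa using hv.1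
    exact (isClosed_le continuous_norm continuous_const).inter
      (isClosed_le continuous_const (continuous_id.inner (𝕜 := ℝ) continuous_const).abs)
  have hM : ∀ p : ℕ × Fin n, MeasurableSet {x | rowMap (d p.1) (φ x) ∈ T p.1 p.2} := fun p =>
    ((continuous_rowMap (d p.1)).comp hφ).measurable (hT p.1 p.2)
  exact measurableSet_isCompact_subset_iUnion hZ
    (O := fun p : ℕ × Fin n => rowMap (d p.1) ⁻¹' axisCone b p.2)
    (fun p => (isOpen_axisCone b p.2).preimage (continuous_rowMap _)) hM

open Classical in
lemma isStarUpperGradient_piecewise_narrowSet {φ : X → E n} {K : ℝ≥0} (hφ : LipschitzWith K φ)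
    {b : ℕ} {T : ℕ → Fin n → Set (Fin n → ℝ)}
    (hT : ∀ k j, ∀ Γ ⊆ T k j, (∀ x ∈ Γ, ∀ y ∈ Γ, ∀ i, |x i - y i| ≤ 1) →
      (∀ x ∈ Γ, ∀ y ∈ Γ, ∀ i ≠ j, b * |x i - y i| ≤ |x j - y j|) →
      volume ((fun x : Fin n → ℝ => x j) '' Γ) = 0) (w : E n) (ε : ℝ) :
    IsStarUpperGradient (fun y => ⟪φ y, w⟫)
      ((narrowSet φ K b T w ε).piecewise (fun _ => ε) fun _ => K * ‖w‖) := by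
  intro γ hγ
  have hdom := γ.isCompact_dom.measurableSet
  have hlip : LipschitzOnWith K (φ ∘ γ.fn) γ.dom := by
    simpa using hφ.comp_lipschitzOnWith hγ
  have hnull : ∀ᵐ t, ∀ p : ℕ × Fin n,
      t ∉ {t ∈ γ.dom | rowMap (TopologicalSpace.denseSeq (Fin n → E n) p.1) (φ (γ.fn t)) ∈
        T p.1 p.2 ∧ ∃ v ∈ axisCone b p.2, HasDerivWithinAt (fun t =>
          rowMap (TopologicalSpace.denseSeq (Fin n → E n) p.1) (φ (γ.fn t))) v γ.dom t} :=
    ae_all_iff.2 fun p => measure_eq_zero_iff_ae_notMem.1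
      (volume_hasDerivWithinAt_axisCone_eq_zero (hT p.1 p.2) _ _)
  filter_upwards [ae_restrict_accPt _ hdom, ae_restrict_of_ae hnull,
    ae_restrict_of_ae (hlip.ae_differentiableWithinAt_of_mem (μ := volume)),
    ae_restrict_mem hdom] with t hacc hp hdiff ht v hv
  obtain ⟨u, hu⟩ : ∃ u, HasDerivWithinAt (φ ∘ γ.fn) u γ.dom t :=
    ⟨_, (hdiff ht).hasDerivWithinAt⟩
  have huK := norm_le_of_hasDerivWithinAt_of_lipschitzOnWith ht hacc hlip hu
  have huw : HasDerivWithinAt ((fun y => ⟪φ y, w⟫) ∘ γ.fn) ⟪u, w⟫ γ.dom t := by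
    simpa [Function.comp_def, real_inner_comm] using
      ((innerSL ℝ w).hasFDerivAt.comp_hasDerivWithinAt t hu)
  obtain rfl : v = ⟪u, w⟫ := (uniqueDiffWithinAt_iff_accPt.2 hacc).eq_deriv _ hv huw
  by_cases hx : γ.fn t ∈ narrowSet φ K b T w ε
  · rw [piecewise_eq_of_mem _ _ _ hx]
    by_contra! hlt
    obtain ⟨p, hpT, hpu⟩ := mem_iUnion₂.1 (hx ⟨huK, hlt.le⟩)
    exact hp p ⟨ht, hpT, _, hpu, HasDerivWithinAt.rowMap_comp _ hu⟩
  · rw [piecewise_eq_of_notMem _ _ _ hx]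
    exact (abs_real_inner_le_norm u w).trans (by gcongr)

end StarUpperGradients

section Dependence

variable {n : ℕ}

/-- The points at which some nontrivial linear combination of the components of `φ` has vanishing
pointwise Lipschitz constant. -/
def depSet (φ : X → E n) : Set X :=
  {x | ∃ w : E n, ‖w‖ = 1 ∧ ∀ c > 0, ∀ᶠ y in 𝓝 x, |⟪φ y - φ x, w⟫| ≤ c * dist y x}

lemma abs_inner_sub_le {φ : X → E n} {K : ℝ≥0} (hφ : LipschitzWith K φ) (x y : X) (w : E n) :
    |⟪φ y - φ x, w⟫| ≤ K * ‖w‖ * dist y x := by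
  refine (abs_real_inner_le_norm _ _).trans ?_
  calc ‖φ y - φ x‖ * ‖w‖ ≤ K * dist y x * ‖w‖ := by
        gcongr; rw [← dist_eq_norm]; exact hφ.dist_le_mul y x
    _ = K * ‖w‖ * dist y x := by ring

lemma LipschitzWith.inner_const {φ : X → E n} {K : ℝ≥0} (hφ : LipschitzWith K φ) (w : E n) :
    LipschitzWith (K * ‖w‖₊) fun y => ⟪φ y, w⟫ :=
  LipschitzWith.of_dist_le_mul fun y x => by
    rw [Real.dist_eq, ← inner_sub_left]
    exact_mod_cast abs_inner_sub_le hφ x y w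

variable [MeasurableSpace X] [BorelSpace X]

lemma ae_mem_depSet_of_dimH_lt {μ : Measure X} {C : ℝ} (hC : 0 ≤ C)
    (h : ∀ f : X → ℝ, (∃ K, LipschitzWith K f) → ∀ ρ : X → ℝ, Measurable ρ →
      IsStarUpperGradient f ρ → ∀ᵐ x ∂μ, lipAt f x ≤ C * ρ x)
    {φ : X → E n} {K : ℝ≥0} (hφ : LipschitzWith K φ) (hn : dimH (Set.univ : Set X) < n) :
    ∀ᵐ x ∂μ, x ∈ depSet φ := by
  classical
  obtain ⟨s, hds, hsn⟩ := ENNReal.lt_iff_exists_nnreal_btwn.1 hn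
  obtain ⟨b, -, hb⟩ := exists_cover_directionally_null n s (by exact_mod_cast hsn)
  let d := TopologicalSpace.denseSeq (Fin n → E n)
  have hnull : ∀ k, μH[s] (range (rowMap (d k) ∘ φ)) = 0 := fun k => by
    obtain ⟨L, hL⟩ := lipschitzWith_rowMap (d k)
    exact hausdorffMeasure_of_dimH_lt (((hL.comp hφ).dimH_range_le).trans_lt hds)
  choose T hTm hTc hTn using fun k => hb _ (hnull k)
  let e := TopologicalSpace.denseSeq (E n)
  have hae : ∀ᵐ x ∂μ, ∀ q : ℕ × ℕ, lipAt (fun y => ⟪φ y, e q.1⟫) x ≤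
      C * (narrowSet φ K b T (e q.1) (1 / ((q.2 : ℝ) + 1))).piecewise
        (fun _ => 1 / ((q.2 : ℝ) + 1)) (fun _ => K * ‖e q.1‖) x :=
    ae_all_iff.2 fun q => h _ ⟨_, LipschitzWith.inner_const hφ _⟩ _
      (measurable_const.piecewise (measurableSet_narrowSet hφ.continuous _ _ hTm _ _)
        measurable_const)
      (isStarUpperGradient_piecewise_narrowSet hφ hTn _ _)
  filter_upwards [hae] with x hx
  obtain ⟨w, hw1, hw⟩ := exists_orthogonal_of_avoid_axisCone b
    {v : E n | ∀ p : ℕ × Fin n, rowMap (d p.1) (φ x) ∈ T p.1 p.2 →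
      rowMap (d p.1) v ∉ axisCone b p.2} fun k => by
        obtain ⟨j, hj⟩ := mem_iUnion.1 (hTc k (mem_range_self x))
        exact ⟨j, fun v hv => hv (k, j) hj⟩
  refine ⟨w, hw1, fun c hc => ?_⟩
  obtain ⟨m, hm⟩ := exists_nat_one_div_lt (show 0 < c / (C + 2) by positivity)
  set ε : ℝ := 1 / ((m : ℝ) + 1) with hε
  have hε0 : 0 < ε := by positivity
  obtain ⟨i, hi⟩ := (TopologicalSpace.denseRange_denseSeq (E n)).exists_dist_lt w
    (show 0 < ε / (K + 1) by positivity)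
  change dist w (e i) < _ at hi
  have hKi : K * ‖w - e i‖ < ε := by
    rw [← dist_eq_norm]
    rw [lt_div_iff₀ (by positivity)] at hi
    nlinarith [dist_nonneg (x := w) (y := e i)]
  have hmem : x ∈ narrowSet φ K b T (e i) ε := by
    rintro v ⟨hvK, hvε⟩
    by_contra hv
    have hvw := hw v fun p hp hpv => hv (mem_iUnion₂.2 ⟨p, hp, hpv⟩)
    have h1 : |⟪v, e i⟫| ≤ K * ‖w - e i‖ := by
      rw [← abs_neg, ← zero_sub, ← hvw, ← inner_sub_right]
      exact (abs_real_inner_le_norm _ _).trans (by gcongr)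
    linarith
  have hlip : lipAt (fun y => ⟪φ y, e i⟫) x < (C + 1) * ε := by
    have := hx (i, m)
    rw [piecewise_eq_of_mem _ _ _ hmem] at this
    linarith
  filter_upwards [eventually_le_of_lipAt_lt (LipschitzWith.inner_const hφ _) hlip] with y hy
  rw [← inner_sub_left] at hy
  calc |⟪φ y - φ x, w⟫| = |⟪φ y - φ x, e i⟫ + ⟪φ y - φ x, w - e i⟫| := by
        rw [← inner_add_right, add_sub_cancel]
    _ ≤ (C + 1) * ε * dist y x + K * ‖w - e i‖ * dist y x :=
        (abs_add_le _ _).trans (add_le_add hy (abs_inner_sub_le hφ _ _ _))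
    _ ≤ (C + 1) * ε * dist y x + ε * dist y x := by gcongr
    _ = ε * (C + 2) * dist y x := by ring
    _ ≤ c * dist y x := by gcongr; exact ((lt_div_iff₀ (by positivity)).1 hm).le

end Dependence

section Charts

variable {n : ℕ}

lemma isClosed_setOf_exists_abs_inner_le {φ : X → E n} (hφ : Continuous φ) (c δ : ℝ) :
    IsClosed {x | ∃ w : sphere (0 : E n) 1, ∀ y, dist y x < δ →
      |⟪φ y - φ x, (w : E n)⟫| ≤ c * dist y x} := by
  have hS : IsClosed {p : X × sphere (0 : E n) 1 | ∀ y, dist y p.1 < δ →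
      |⟪φ y - φ p.1, (p.2 : E n)⟫| ≤ c * dist y p.1} := by
    have : {p : X × sphere (0 : E n) 1 | ∀ y, dist y p.1 < δ →
        |⟪φ y - φ p.1, (p.2 : E n)⟫| ≤ c * dist y p.1} =
        ⋂ y, ({p : X × sphere (0 : E n) 1 | δ ≤ dist y p.1} ∪
          {p | |⟪φ y - φ p.1, (p.2 : E n)⟫| ≤ c * dist y p.1}) := by
      ext p
      simp [imp_iff_not_or]
    rw [this]
    exact isClosed_iInter fun y => (isClosed_le (by fun_prop) (by fun_prop)).union
      (isClosed_le (by fun_prop) (by fun_prop))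
  convert isClosedMap_fst_of_compactSpace _ hS using 1
  ext x
  simp

lemma depSet_eq_iInter_iUnion {φ : X → E n} {K : ℝ≥0} (hφ : LipschitzWith K φ) :
    depSet φ = ⋂ k : ℕ, ⋃ m : ℕ, {x | ∃ w : sphere (0 : E n) 1, ∀ y,
      dist y x < 1 / ((m : ℝ) + 1) → |⟪φ y - φ x, (w : E n)⟫| ≤ 1 / ((k : ℝ) + 1) * dist y x} := by
  ext x
  simp only [mem_iInter, mem_iUnion, mem_ofPred_eq]
  constructor
  · rintro ⟨w, hw1, hw⟩ k
    obtain ⟨ε, hε, hy⟩ := Metric.eventually_nhds_iff.1 (hw (1 / ((k : ℝ) + 1)) (by positivity))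
    obtain ⟨m, hm⟩ := exists_nat_one_div_lt hε
    exact ⟨m, ⟨w, by simpa using hw1⟩, fun y hyx => hy (hyx.trans hm)⟩
  · intro hx
    choose m w hw using hx
    obtain ⟨w₀, -, σ, hσ, hlim⟩ := (isCompact_univ (X := sphere (0 : E n) 1)).tendsto_subseq
      fun k => mem_univ (w k)
    refine ⟨w₀, by simp, fun c hc => ?_⟩
    have h1 : Tendsto (fun i => 1 / ((σ i : ℝ) + 1) + K * ‖(w₀ : E n) - w (σ i)‖) atTop (𝓝 0) := by
      have h2 : Tendsto (fun i => (w (σ i) : E n)) atTop (𝓝 w₀) :=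
        (continuous_subtype_val.tendsto _).comp hlim
      simpa using (tendsto_one_div_add_atTop_nhds_zero_nat.comp hσ.tendsto_atTop).add
        (((tendsto_const_nhds (x := (w₀ : E n))).sub h2).norm.const_mul (K : ℝ))
    obtain ⟨i, hi⟩ := (h1.eventually (gt_mem_nhds hc)).exists
    filter_upwards [ball_mem_nhds x (show 0 < 1 / ((m (σ i) : ℝ) + 1) by positivity)] with y hy
    calc |⟪φ y - φ x, (w₀ : E n)⟫|
        = |⟪φ y - φ x, (w (σ i) : E n)⟫ + ⟪φ y - φ x, (w₀ : E n) - w (σ i)⟫| := by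
          rw [← inner_add_right, add_sub_cancel]
      _ ≤ 1 / ((σ i : ℝ) + 1) * dist y x + K * ‖(w₀ : E n) - w (σ i)‖ * dist y x :=
          (abs_add_le _ _).trans (add_le_add (hw _ y hy) (abs_inner_sub_le hφ _ _ _))
      _ = (1 / ((σ i : ℝ) + 1) + K * ‖(w₀ : E n) - w (σ i)‖) * dist y x := by ring
      _ ≤ c * dist y x := by gcongr

lemma measurableSet_depSet [MeasurableSpace X] [BorelSpace X] {φ : X → E n} {K : ℝ≥0}
    (hφ : LipschitzWith K φ) : MeasurableSet (depSet φ) := by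
  rw [depSet_eq_iInter_iUnion hφ]
  exact MeasurableSet.iInter fun k => MeasurableSet.iUnion fun m =>
    (isClosed_setOf_exists_abs_inner_le hφ.continuous _ _).measurableSet

lemma depSet_eq_empty (φ : X → E 0) : depSet φ = ∅ := by
  refine eq_empty_of_forall_notMem fun x ⟨w, hw, _⟩ => ?_
  rw [Subsingleton.elim w 0, norm_zero] at hw
  exact zero_ne_one hw

lemma mem_depSet_of_ne_zero {φ : X → E n} {x : X} {w : E n} (hw0 : w ≠ 0)
    (hw : ∀ c > 0, ∀ᶠ y in 𝓝 x, |⟪φ y - φ x, w⟫| ≤ c * dist y x) : x ∈ depSet φ := by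
  have hw' : 0 < ‖w‖ := norm_pos_iff.2 hw0
  refine ⟨‖w‖⁻¹ • w, norm_smul_inv_norm hw0, fun c hc => ?_⟩
  filter_upwards [hw (‖w‖ * c) (by positivity)] with y hy
  rw [inner_smul_right, abs_mul, abs_of_pos (by positivity), inv_mul_le_iff₀ hw']
  linarith

lemma tendsto_abs_div_dist_iff {a : X → ℝ} {x : X} (ha : a x = 0) :
    Tendsto (fun y => |a y| / dist y x) (𝓝[≠] x) (𝓝 0) ↔
      ∀ c > 0, ∀ᶠ y in 𝓝 x, |a y| ≤ c * dist y x := by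
  constructor
  · intro h c hc
    filter_upwards [eventually_nhdsWithin_iff.1 (h.eventually (gt_mem_nhds hc))] with y hy
    rcases eq_or_ne y x with rfl | hyx
    · simp [ha]
    · exact ((div_lt_iff₀ (dist_pos.2 hyx)).1 (hy hyx)).le
  · intro h
    refine Metric.tendsto_nhds.2 fun c hc => ?_
    filter_upwards [nhdsWithin_le_nhds (h (c / 2) (by positivity)), eventually_mem_nhdsWithin]
      with y hy hyx
    rw [Real.dist_eq, sub_zero, abs_of_nonneg (by positivity), div_lt_iff₀ (dist_pos.2 hyx)]
    nlinarith [dist_pos.2 hyx]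

/-- The map `(f, φ)` into `ℝⁿ⁺¹`. -/
def consMap {Y : Type*} (f : Y → ℝ) (φ : Y → E n) (x : Y) : E (n + 1) :=
  WithLp.toLp 2 (Fin.cons (f x) fun i => φ x i)

lemma exists_lipschitzWith_consMap {f : X → ℝ} {φ : X → E n} (hf : ∃ K, LipschitzWith K f)
    (hφ : ∃ K, LipschitzWith K φ) : ∃ K, LipschitzWith K (consMap f φ) := by
  obtain ⟨K, hK⟩ := hf
  obtain ⟨L, hL⟩ := hφ
  have : LipschitzWith (max K L) fun x => (Fin.cons (f x) fun i => φ x i : Fin (n + 1) → ℝ) := by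
    refine LipschitzWith.of_dist_le_mul fun x y => (dist_pi_le_iff (by positivity)).2 fun i => ?_
    refine Fin.cases ?_ (fun i => ?_) i
    · exact (hK.dist_le_mul x y).trans (by gcongr; exact le_max_left _ _)
    · refine le_trans ?_ ((hL.dist_le_mul x y).trans (by gcongr; exact le_max_right _ _))
      rw [dist_eq_norm, dist_eq_norm]
      exact PiLp.norm_apply_le (φ x - φ y) i
  exact ⟨_, (PiLp.lipschitzWith_toLp 2 _).comp this⟩

lemma inner_consMap_sub {Y : Type*} (f : Y → ℝ) (φ : Y → E n) (x y : Y) (w : E (n + 1)) :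
    ⟪consMap f φ y - consMap f φ x, w⟫ =
      w 0 * (f y - f x) + ⟪φ y - φ x, (WithLp.toLp 2 fun i => w i.succ : E n)⟫ := by
  simp [PiLp.inner_apply, Fin.sum_univ_succ, consMap]

lemma eq_of_tendsto_of_notMem_depSet {f : X → ℝ} {φ : X → E n} {x : X} (hx : x ∉ depSet φ)
    {L L' : E n →ₗ[ℝ] ℝ}
    (hL : Tendsto (fun y => |f y - f x - L (φ y - φ x)| / dist y x) (𝓝[≠] x) (𝓝 0))
    (hL' : Tendsto (fun y => |f y - f x - L' (φ y - φ x)| / dist y x) (𝓝[≠] x) (𝓝 0)) :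
    L = L' := by
  let w : E n :=
    (InnerProductSpace.toDual ℝ (E n)).symm (LinearMap.toContinuousLinearMap (L' - L))
  have hw : ∀ v, ⟪v, w⟫ = L' v - L v := fun v => by
    rw [real_inner_comm, InnerProductSpace.toDual_symm_apply]
    simp
  by_contra hne
  refine hx (mem_depSet_of_ne_zero (w := w) (fun h0 => hne ?_) fun c hc => ?_)
  · ext v
    have := hw v
    rw [h0, inner_zero_right] at this
    linarith
  · rw [tendsto_abs_div_dist_iff (by simp)] at hL hL'
    filter_upwards [hL (c / 2) (by positivity), hL' (c / 2) (by positivity)] with y hy hy'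
    calc |⟪φ y - φ x, w⟫|
        = |f y - f x - L (φ y - φ x) - (f y - f x - L' (φ y - φ x))| := by rw [hw]; congr 1; ring
      _ ≤ c * dist y x := (abs_sub _ _).trans (by linarith)

lemma diffWrtAt_of_mem_depSet_consMap {f : X → ℝ} {φ : X → E n} {x : X} (hx : x ∉ depSet φ)
    (hfx : x ∈ depSet (consMap f φ)) : DiffWrtAt φ f x := by
  obtain ⟨w, hw1, hw⟩ := hfx
  set w' : E n := WithLp.toLp 2 fun i => w i.succ with hw'
  have hw0 : w 0 ≠ 0 := by
    intro h0
    refine hx (mem_depSet_of_ne_zero (w := w') (fun h => ?_) fun c hc => ?_)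
    · have : w = 0 := by
        ext i
        refine Fin.cases h0 (fun i => ?_) i
        simpa [w'] using congrArg (fun v : E n => v i) h
      simp [this] at hw1
    · simpa [inner_consMap_sub, h0] using hw c hc
  have hlim : Tendsto (fun y => |f y - f x - (-(w 0)⁻¹ • innerₛₗ ℝ w') (φ y - φ x)| / dist y x)
      (𝓝[≠] x) (𝓝 0) := by
    refine (tendsto_abs_div_dist_iff (by simp)).2 fun c hc => ?_
    filter_upwards [hw (|w 0| * c) (by positivity)] with y hy
    have : f y - f x - (-(w 0)⁻¹ • innerₛₗ ℝ w') (φ y - φ x) =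
        (w 0)⁻¹ * ⟪consMap f φ y - consMap f φ x, w⟫ := by
      rw [inner_consMap_sub, real_inner_comm]
      simp
      field_simp
      ring
    rw [this, abs_mul, abs_inv, inv_mul_le_iff₀ (abs_pos.2 hw0)]
    linarith
  exact ⟨_, hlim, fun L hL => eq_of_tendsto_of_notMem_depSet hx hL hlim⟩

lemma exists_seq_measure_diff_iUnion_eq_zero {α ι : Type*} [MeasurableSpace α] [Nonempty ι]
    (μ : Measure α) [SFinite μ] {A : ι → Set α} (hA : ∀ i, MeasurableSet (A i)) :
    ∃ u : ℕ → ι, ∀ i, μ (A i \ ⋃ k, A (u k)) = 0 := by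
  suffices H : ∃ u : ℕ → ι, ∀ i, μ.toFinite (A i \ ⋃ k, A (u k)) = 0 by
    obtain ⟨u, hu⟩ := H
    exact ⟨u, fun i => absolutelyContinuous_toFinite μ (hu i)⟩
  let F : (ℕ → ι) → ℝ≥0∞ := fun v => μ.toFinite (⋃ k, A (v k))
  obtain ⟨a, -, ha, haF⟩ := exists_seq_tendsto_sSup (range_nonempty F) (OrderTop.bddAbove _)
  choose v hv using haF
  let u : ℕ → ι := fun k => v k.unpair.1 k.unpair.2
  have hu : ∀ v', F v' ≤ F u := fun v' => (le_iSup F v').trans <| le_of_tendsto' ha fun m => by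
    rw [← hv m]
    refine measure_mono (iUnion_subset fun k => ?_)
    simpa [u] using subset_iUnion (fun k => A (u k)) (Nat.pair m k)
  refine ⟨u, fun i => ?_⟩
  have hmeas : MeasurableSet (⋃ k, A (u k)) := MeasurableSet.iUnion fun k => hA _
  have hi := hu fun k => Nat.casesOn k i u
  have hsub : A i ∪ ⋃ k, A (u k) ⊆ ⋃ k : ℕ, A (Nat.casesOn k i u) :=
    union_subset (subset_iUnion (fun k : ℕ => A (Nat.casesOn k i u)) 0)
      (iUnion_subset fun k => subset_iUnion (fun k : ℕ => A (Nat.casesOn k i u)) (k + 1))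
  rw [← union_sdiff_right, measure_sdiff subset_union_right hmeas.nullMeasurableSet
    (measure_ne_top _ _)]
  exact tsub_eq_zero_of_le ((measure_mono hsub).trans hi)

end Charts

variable {X : Type*} [MetricSpace X] [CompleteSpace X] [TopologicalSpace.SeparableSpace X]
  [MeasurableSpace X] [BorelSpace X]

/-- If `dim_H X < ∞` and there is `C ≥ 1` such that `Lip(f,·) ≤ C ρ`
`μ`-a.e. for every Lipschitz `f : X → ℝ` and every Borel `*`-upper gradient `ρ` of `f`,
then `(X,d,μ)` is a Lipschitz differentiability space with chart dimensions at most
`dim_H X`. -/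
theorem cheeger_via_star_upper_gradients (μ : Measure X) [SigmaFinite μ]
    (hdim : dimH (Set.univ : Set X) < ⊤) (C : ℝ) (hC : 1 ≤ C)
    (h : ∀ f : X → ℝ, (∃ K, LipschitzWith K f) → ∀ ρ : X → ℝ, Measurable ρ →
      IsStarUpperGradient f ρ → ∀ᵐ x ∂μ, lipAt f x ≤ C * ρ x) :
    IsLipDiffSpaceWith μ (fun k => (k : ℝ≥0∞) ≤ dimH (Set.univ : Set X)) := by
  classical
  have hdep := fun {n : ℕ} {φ : X → E n} {K : ℝ≥0} =>
    ae_mem_depSet_of_dimH_lt (n := n) (φ := φ) (K := K) (μ := μ) (zero_le_one.trans hC) h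
  let ι : ℕ → Type _ := fun n => {φ : X → E n // ∃ K, LipschitzWith K φ}
  have hι : ∀ n, Nonempty (ι n) := fun n => ⟨⟨fun _ => 0, 0, LipschitzWith.const 0⟩⟩
  choose u hu using fun n => exists_seq_measure_diff_iUnion_eq_zero μ
    (A := fun φ : ι n => (depSet φ.1)ᶜ) fun φ => (measurableSet_depSet φ.2.choose_spec).compl
  let M : ℕ → Set X := fun n => ⋃ k, (depSet (u n k).1)ᶜ
  have hmeas : ∀ n k, MeasurableSet (depSet (u n k).1)ᶜ := fun n k =>
    (measurableSet_depSet (u n k).2.choose_spec).compl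
  let U : ℕ × ℕ → Set X := fun p => if (p.1 : ℝ≥0∞) ≤ dimH (Set.univ : Set X)
    then (depSet (u p.1 p.2).1)ᶜ \ M (p.1 + 1) else (depSet (u p.1 p.2).1)ᶜ
  have hU : ∀ p, MeasurableSet (U p) := fun p => by
    by_cases hp : (p.1 : ℝ≥0∞) ≤ dimH (Set.univ : Set X)
    · simpa only [U, if_pos hp] using
        (hmeas _ _).diff (MeasurableSet.iUnion fun k => hmeas _ _)
    · simpa only [U, if_neg hp] using hmeas _ _
  have hcover : (⋃ p, U p) = Set.univ := by
    refine eq_univ_of_forall fun x => ?_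
    by_contra hx
    have hM : ∀ n, x ∈ M n := fun n => by
      induction n with
      | zero => exact mem_iUnion.2 ⟨0, by simp [depSet_eq_empty]⟩
      | succ n ih =>
        obtain ⟨k, hk⟩ := mem_iUnion.1 ih
        by_contra hxM
        refine hx (mem_iUnion.2 ⟨(n, k), ?_⟩)
        by_cases hn : (n : ℝ≥0∞) ≤ dimH (Set.univ : Set X)
        · simpa only [U, if_pos hn] using mem_sdiff_of_mem hk hxM
        · simpa only [U, if_neg hn] using hk
    obtain ⟨n, hn⟩ := ENNReal.exists_nat_gt hdim.ne
    obtain ⟨k, hk⟩ := mem_iUnion.1 (hM n)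
    refine hx (mem_iUnion.2 ⟨(n, k), ?_⟩)
    simpa only [U, if_neg hn.not_ge] using hk
  have hchart : ∀ p, ∃ (N : ℕ) (φ : X → E N), (N : ℝ≥0∞) ≤ dimH (Set.univ : Set X) ∧
      (∃ K, LipschitzWith K φ) ∧ ∀ f : X → ℝ, (∃ K, LipschitzWith K f) →
        ∀ᵐ x ∂μ, x ∈ U p → DiffWrtAt φ f x := by
    rintro ⟨n, k⟩
    by_cases hn : (n : ℝ≥0∞) ≤ dimH (Set.univ : Set X)
    · refine ⟨n, (u n k).1, hn, (u n k).2, fun f hf => ?_⟩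
      have hnull := hu (n + 1) ⟨_, exists_lipschitzWith_consMap hf (u n k).2⟩
      filter_upwards [measure_eq_zero_iff_ae_notMem.1 hnull] with x hx hxU
      simp only [U, if_pos hn] at hxU
      refine diffWrtAt_of_mem_depSet_consMap hxU.1 ?_
      by_contra hxd
      exact hx ⟨hxd, hxU.2⟩
    · refine ⟨0, fun _ => 0, by simp, ⟨0, LipschitzWith.const 0⟩, fun f _ => ?_⟩
      filter_upwards [hdep (u n k).2.choose_spec (not_le.1 hn)] with x hx hxU
      simp only [U, if_neg hn] at hxU
      exact absurd hx hxU
  choose N φ hN hφ hdiff using hchart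
  refine ⟨fun i => N i.unpair, fun i => U i.unpair, fun i => φ i.unpair, fun i => hN _,
    fun i => hU _, ?_, fun i => hφ _, fun f hf i => hdiff _ f hf⟩
  rw [← hcover]
  exact Nat.surjective_unpair.iUnion_comp U

end BKO
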